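/- arXiv:2110.00515 — 4 statements merged into one kernel-verified Lean document; each statement's English description precedes it below -/
import Mathlib

section
/- Thue's approximation theorem: let α be a real algebraic number of degree d over ℚ, with d ≥ 3, and let ρ be a real number with ρ > d/2. Then the set of pairs of integers (p, q) with q ≥ 1 such that q^ρ · |q·α − p| ≤ 1 is finite. -/
/-!
Thue's method. Siegel's lemma yields integer polynomials `P`, `Q` of degree `< n`, with small
coefficients, such that `P(X) - α Q(X)` vanishes at `X = α` to order `m`, where `d m` is slightly
less than `2 n`. Suppose that `α` has two very good approximations `x = p₁ / q₁` and
`y = p₂ / q₂`, with `q₁` large and `q₂` about `q₁ ^ m`. The Wronskian of `P` and `Q` is nonzero,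
has degree `< 2 n` and is divisible by the `(m - 1)`-st power of the minimal polynomial of `α`, so
it has only a low order of vanishing at `x`; since it is also the Wronskian of `P - y Q` and `Q`,
some derivative of `P(X) - y Q(X)` of low order `j` does not vanish at `x`. That value, divided by
`j!`, is a rational number with denominator dividing `q₁ ^ n q₂`, hence at least `1 / (q₁ ^ n q₂)`
in absolute value. On the other hand Taylor expansion at `(α, α)` bounds it by `c ^ n`, for a
constant `c`, times `|x - α| ^ (m - j) + |y - α|`, which is too small once `ρ > d / 2`. So the
denominators of very good approximations are bounded.
-/

open Polynomial

section Algebra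

theorem map_hasseDeriv {R S : Type*} [Semiring R] [Semiring S] (p : R[X]) (j : ℕ) (f : R →+* S) :
    (hasseDeriv j p).map f = hasseDeriv j (p.map f) := by
  ext i
  simp [hasseDeriv_coeff]

variable {R A K L : Type*} [CommRing R] [CommRing A] [Algebra R A] [Field K] [Field L] [Algebra K L]

theorem X_sub_C_pow_dvd_iff_hasseDeriv_eval_eq_zero {p : R[X]} {a : R} {m : ℕ} :
    (X - C a) ^ m ∣ p ↔ ∀ j < m, (hasseDeriv j p).eval a = 0 := by
  rw [X_sub_C_pow_dvd_iff, X_pow_dvd_iff]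
  simp only [← taylor_apply, taylor_coeff]

theorem hasseDeriv_eval_eq_sum_range {p : R[X]} {n : ℕ} (hp : p.natDegree < n) (j : ℕ) (x : R) :
    (hasseDeriv j p).eval x = ∑ i ∈ Finset.range n, p.coeff i * (i.choose j * x ^ (i - j)) := by
  conv_lhs => rw [p.as_sum_range' n hp]
  simp only [map_sum, eval_finsetSum, hasseDeriv_monomial, eval_monomial]
  exact Finset.sum_congr rfl fun i _ ↦ by ring

/-- The specialisation `P(X) - y Q(X)` at `Y = y` of the polynomial `P(X) - Y Q(X)`, the shape of
Thue's auxiliary polynomial. The parameter `y` may lie in an extension of the coefficient ring. -/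
noncomputable def pencil (P Q : R[X]) (y : A) : A[X] :=
  P.map (algebraMap R A) - C y * Q.map (algebraMap R A)

theorem pencil_map {S : Type*} [CommRing S] [Algebra R S] [Algebra S A] [IsScalarTower R S A]
    (P Q : R[X]) (y : A) :
    pencil (P.map (algebraMap R S)) (Q.map (algebraMap R S)) y = pencil P Q y := by
  simp [pencil, Polynomial.map_map, ← IsScalarTower.algebraMap_eq]

theorem hasseDeriv_pencil (P Q : R[X]) (y : A) (j : ℕ) :
    hasseDeriv j (pencil P Q y) = pencil (hasseDeriv j P) (hasseDeriv j Q) y := by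
  simp only [pencil, map_sub, ← smul_eq_C_mul, map_smul, map_hasseDeriv]

theorem pencil_comp_C_mul_X (P Q : R[X]) (b : R) (y : A) :
    pencil (P.comp (C b * X)) (C b * Q.comp (C b * X)) y =
      (pencil P Q (algebraMap R A b * y)).comp (C (algebraMap R A b) * X) := by
  simp only [pencil, Polynomial.map_comp, Polynomial.map_mul, map_C, map_X, sub_comp, mul_comp,
    C_comp, C_mul]
  ring

theorem pow_sub_one_dvd_map_wronskian {P Q : R[X]} {D : A[X]} {y : A} {m : ℕ}
    (h : D ^ m ∣ pencil P Q y) : D ^ (m - 1) ∣ (wronskian P Q).map (algebraMap R A) := by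
  have wronskian_eq : (wronskian P Q).map (algebraMap R A) =
      pencil P Q y * derivative (Q.map (algebraMap R A)) -
        derivative (pencil P Q y) * Q.map (algebraMap R A) := by
    simp only [wronskian, pencil, Polynomial.map_sub, Polynomial.map_mul, derivative_map,
      derivative_sub, derivative_mul, derivative_C]
    ring
  rw [wronskian_eq]
  exact dvd_sub (((pow_dvd_pow _ (Nat.sub_le _ _)).trans h).mul_right _)
    ((pow_sub_one_dvd_derivative_of_pow_dvd h).mul_right _)

theorem minpoly_pow_dvd_of_X_sub_C_pow_dvd_map {α : L} (hα : IsSeparable K α) {m : ℕ} {f : K[X]}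
    (hf : (X - C α) ^ m ∣ f.map (algebraMap K L)) : minpoly K α ^ m ∣ f := by
  obtain ⟨μ', hμ'⟩ : X - C α ∣ (minpoly K α).map (algebraMap K L) := by
    rw [dvd_iff_isRoot, IsRoot, eval_map_algebraMap, minpoly.aeval]
  have simple_root : ¬ X - C α ∣ μ' := by
    rintro ⟨ν, rfl⟩
    exact (irreducible_X_sub_C α).not_isUnit
      ((Polynomial.Separable.map hα).squarefree _ ⟨ν, by rw [hμ', mul_assoc]⟩)
  induction m generalizing f with
  | zero => simp
  | succ m ih =>
    obtain ⟨g, rfl⟩ : minpoly K α ∣ f := by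
      refine minpoly.dvd K α ?_
      rw [← eval_map_algebraMap]
      exact dvd_iff_isRoot.1 ((dvd_pow_self _ m.succ_ne_zero).trans hf)
    rw [Polynomial.map_mul, hμ', pow_succ', mul_assoc,
      mul_dvd_mul_iff_left (X_sub_C_ne_zero α)] at hf
    rw [pow_succ']
    exact mul_dvd_mul_left _ (ih ((prime_X_sub_C α).pow_dvd_of_dvd_mul_left m simple_root hf))

theorem exists_eq_C_mul_of_wronskian_eq_zero [CharZero K] {P Q : K[X]} (h : wronskian P Q = 0) :
    ∃ (g : K[X]) (a b : K), P = C a * g ∧ Q = C b * g := by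
  rcases eq_or_ne Q 0 with rfl | hQ
  · exact ⟨P, 1, 0, by simp, by simp⟩
  obtain ⟨p, q, g, hpq, rfl, rfl⟩ := UniqueFactorizationMonoid.exists_reduced_factors' P Q hQ
  have wronskian_pq : wronskian p q = 0 := by
    have wronskian_mul : wronskian (g * p) (g * q) = g ^ 2 * wronskian p q := by
      simp only [wronskian, derivative_mul]
      ring
    exact (mul_eq_zero.1 (wronskian_mul ▸ h)).resolve_left (pow_ne_zero 2 (left_ne_zero_of_mul hQ))
  obtain ⟨hp, hq⟩ := hpq.isCoprime.wronskian_eq_zero_iff.1 wronskian_pq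
  refine ⟨g, p.coeff 0, q.coeff 0, ?_, ?_⟩
  · rw [← eq_C_of_derivative_eq_zero hp, mul_comm]
  · rw [← eq_C_of_derivative_eq_zero hq, mul_comm]

theorem wronskian_ne_zero_of_pow_dvd_pencil [CharZero K] {α : L} (hα : IsIntegral K α)
    (hirr : α ∉ (algebraMap K L).range) {P Q : K[X]} (hPQ : P ≠ 0 ∨ Q ≠ 0) {m : ℕ}
    (hP : P.natDegree < (minpoly K α).natDegree * m)
    (hQ : Q.natDegree < (minpoly K α).natDegree * m)
    (h : (X - C α) ^ m ∣ pencil P Q α) : wronskian P Q ≠ 0 := by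
  intro hW
  obtain ⟨g, a, b, rfl, rfl⟩ := exists_eq_C_mul_of_wronskian_eq_zero hW
  obtain ⟨hab, hg⟩ : (a ≠ 0 ∨ b ≠ 0) ∧ g ≠ 0 := by
    simp only [ne_eq, mul_eq_zero, C_eq_zero] at hPQ
    tauto
  have hlin : algebraMap K L a - α * algebraMap K L b ≠ 0 := by
    intro h0
    rcases eq_or_ne b 0 with rfl | hb
    · simp_all
    · refine hirr ⟨a / b, ?_⟩
      rw [map_div₀, sub_eq_zero.1 h0, mul_div_cancel_right₀ _ ((_root_.map_ne_zero _).2 hb)]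
  have hpencil : pencil (C a * g) (C b * g) α =
      C (algebraMap K L a - α * algebraMap K L b) * g.map (algebraMap K L) := by
    simp only [pencil, Polynomial.map_mul, map_C, C_sub, C_mul]
    ring
  rw [hpencil, (isUnit_C.2 hlin.isUnit).dvd_mul_left] at h
  have hle := natDegree_le_of_dvd (minpoly_pow_dvd_of_X_sub_C_pow_dvd_map
    (minpoly.irreducible hα).separable h) hg
  rw [natDegree_pow, mul_comm] at hle
  rcases hab with ha | hb
  · rw [natDegree_C_mul ha] at hP; omega
  · rw [natDegree_C_mul hb] at hQ; omega

theorem not_X_sub_C_pow_dvd_pencil [CharZero K] {α : L} (hα : IsIntegral K α)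
    (hirr : α ∉ (algebraMap K L).range) {P Q : K[X]} (hPQ : P ≠ 0 ∨ Q ≠ 0) {m : ℕ}
    (hP : P.natDegree < (minpoly K α).natDegree * m)
    (hQ : Q.natDegree < (minpoly K α).natDegree * m)
    (h : (X - C α) ^ m ∣ pencil P Q α) {J : ℕ}
    (hJ : P.natDegree + Q.natDegree < (minpoly K α).natDegree * (m - 1) + J)
    {x : L} (hx : aeval x (minpoly K α) ≠ 0) (y : L) : ¬ (X - C x) ^ J ∣ pencil P Q y := by
  intro hxy
  set μ := minpoly K α with hμ
  have hW : wronskian P Q ≠ 0 := wronskian_ne_zero_of_pow_dvd_pencil hα hirr hPQ hP hQ h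
  have hμW : μ.map (algebraMap K L) ^ (m - 1) ∣ (wronskian P Q).map (algebraMap K L) := by
    rw [← Polynomial.map_pow]
    exact Polynomial.map_dvd _ (minpoly_pow_dvd_of_X_sub_C_pow_dvd_map
      (minpoly.irreducible hα).separable (pow_sub_one_dvd_map_wronskian h))
  have hcop : IsCoprime (μ.map (algebraMap K L)) (X - C x) := by
    refine ((irreducible_X_sub_C x).coprime_iff_not_dvd.2 ?_).symm
    rwa [dvd_iff_isRoot, IsRoot, eval_map_algebraMap]
  have hle := natDegree_le_of_dvd
    (hcop.pow.mul_dvd hμW (pow_sub_one_dvd_map_wronskian hxy)) ((Polynomial.map_ne_zero_iff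
      (algebraMap K L).injective).2 hW)
  rw [((minpoly.monic hα).map _ |>.pow _).natDegree_mul ((monic_X_sub_C x).pow _),
    natDegree_pow, natDegree_pow, natDegree_X_sub_C, natDegree_map, natDegree_map, ← hμ,
    mul_comm] at hle
  have hlt := natDegree_wronskian_lt_add hW
  omega

end Algebra

section Siegel

theorem X_mul_modByMonic {R : Type*} [CommRing R] {f r : R[X]} (hf : f.Monic)
    (hr : r.degree < f.degree) :
    (X * r) %ₘ f = X * r - C (r.coeff (f.natDegree - 1)) * f := by
  nontriviality R
  refine (div_modByMonic_unique (C (r.coeff (f.natDegree - 1))) _ hf ⟨by ring, ?_⟩).2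
  rw [degree_eq_natDegree hf.ne_zero] at hr ⊢
  refine (degree_lt_iff_coeff_zero _ _).2 fun k hk ↦ ?_
  have hr0 := (degree_lt_iff_coeff_zero _ _).1 hr
  rw [coeff_sub, coeff_C_mul]
  rcases hk.eq_or_lt with rfl | hk
  · rw [hf.coeff_natDegree, mul_one]
    cases hd : f.natDegree with
    | zero => rw [hr0 _ (by omega), coeff_X_mul_zero, sub_zero]
    | succ d => rw [coeff_X_mul, Nat.add_sub_cancel, sub_self]
  · obtain ⟨k, rfl⟩ := Nat.exists_eq_succ_of_ne_zero (by omega : k ≠ 0)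
    rw [coeff_X_mul, hr0 k (by omega), coeff_eq_zero_of_natDegree_lt hk, mul_zero, sub_zero]

theorem exists_abs_coeff_X_pow_modByMonic_le {f : ℤ[X]} (hf : f.Monic) :
    ∃ B : ℝ, 1 ≤ B ∧ ∀ i k, |((X ^ i %ₘ f).coeff k : ℝ)| ≤ B ^ i := by
  rcases eq_or_ne f 1 with rfl | hf1
  · exact ⟨1, le_rfl, by simp⟩
  have hnonneg : 0 ≤ ∑ k ∈ f.support, |(f.coeff k : ℝ)| := Finset.sum_nonneg fun _ _ ↦ abs_nonneg _
  have hcoeff (k : ℕ) : |(f.coeff k : ℝ)| ≤ ∑ k ∈ f.support, |(f.coeff k : ℝ)| := by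
    by_cases hk : k ∈ f.support
    · exact Finset.single_le_sum (f := fun k ↦ |(f.coeff k : ℝ)|) (fun _ _ ↦ abs_nonneg _) hk
    · rwa [notMem_support_iff.1 hk, Int.cast_zero, abs_zero]
  refine ⟨1 + ∑ k ∈ f.support, |(f.coeff k : ℝ)|, by linarith, fun i ↦ ?_⟩
  induction i with
  | zero =>
    intro k
    rw [pow_zero, pow_zero, (modByMonic_eq_self_iff hf).2
      (degree_one.trans_lt (hf.degree_pos.2 hf1)), coeff_one]
    split_ifs <;> simp
  | succ i ih =>
    intro k
    set r := X ^ i %ₘ f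
    have hrec : X ^ (i + 1) %ₘ f = X * r - C (r.coeff (f.natDegree - 1)) * f := by
      rw [← X_mul_modByMonic hf (degree_modByMonic_lt _ hf), pow_succ']
      refine modByMonic_eq_of_dvd_sub hf ?_
      rw [← mul_sub]
      exact (dvd_sub_comm.1 (dvd_modByMonic_sub _ f)).mul_left X
    have hX : |((X * r).coeff k : ℝ)| ≤ (1 + ∑ k ∈ f.support, |(f.coeff k : ℝ)|) ^ i := by
      cases k with
      | zero => simpa using pow_nonneg (by linarith) i
      | succ k => simpa only [coeff_X_mul] using ih k
    rw [hrec, coeff_sub, coeff_C_mul, Int.cast_sub, Int.cast_mul, pow_succ, mul_one_add]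
    refine (abs_sub _ _).trans (add_le_add hX ?_)
    rw [abs_mul]
    exact mul_le_mul (ih _) (hcoeff k) (abs_nonneg _) (pow_nonneg (by linarith) i)

attribute [local instance] Matrix.seminormedAddCommGroup in
theorem exists_ne_zero_dvd_sum_C_mul {ι κ : Type*} [Fintype ι] [Fintype κ] {f : ℤ[X]}
    (hf : f.Monic) (g : ι → κ → ℤ[X]) {A : ℝ} (hA : 1 ≤ A)
    (hg : ∀ i j k, |((g i j %ₘ f).coeff k : ℝ)| ≤ A)
    (hpos : 0 < Fintype.card ι * f.natDegree)
    (hlt : Fintype.card ι * f.natDegree < Fintype.card κ) :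
    ∃ t : κ → ℤ, t ≠ 0 ∧ (∀ i, f ∣ ∑ j, C (t j) * g i j) ∧ ∀ j, |(t j : ℝ)| ≤
      (Fintype.card κ * A) ^ ((Fintype.card ι * f.natDegree : ℝ) /
        (Fintype.card κ - Fintype.card ι * f.natDegree)) := by
  set M : Matrix (ι × Fin f.natDegree) κ ℤ := Matrix.of fun r j ↦ (g r.1 j %ₘ f).coeff r.2
  have hcard : Fintype.card (ι × Fin f.natDegree) = Fintype.card ι * f.natDegree := by simp
  obtain ⟨t, ht0, ht, hnorm⟩ := Int.Matrix.exists_ne_zero_int_vec_norm_le M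
    (hcard.trans_lt hlt) (hpos.trans_eq hcard.symm)
  refine ⟨t, ht0, fun i ↦ ?_, fun j ↦ ?_⟩
  · have hmod : (∑ j, C (t j) * g i j) %ₘ f = ∑ j, C (t j) * (g i j %ₘ f) := by
      simp only [← smul_eq_C_mul]
      exact (map_sum (modByMonicHom f) _ _).trans
        (Finset.sum_congr rfl fun j _ ↦ smul_modByMonic (t j) (g i j))
    rw [← modByMonic_eq_zero_iff_dvd hf, hmod]
    ext k
    rw [finsetSum_coeff, coeff_zero]
    rcases lt_or_ge k f.natDegree with hk | hk
    · have := congrFun ht (i, ⟨k, hk⟩)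
      simp only [Matrix.mulVec, dotProduct, M, Matrix.of_apply, Pi.zero_apply] at this
      simpa only [coeff_C_mul, mul_comm (Polynomial.coeff _ _)] using this
    · refine Finset.sum_eq_zero fun j _ ↦ ?_
      rw [coeff_C_mul, coeff_eq_zero_of_degree_lt, mul_zero]
      exact (degree_modByMonic_lt _ hf).trans_le
        (degree_le_natDegree.trans (Nat.cast_le.2 hk))
  · rw [hcard, Nat.cast_mul] at hnorm
    have hM : max 1 ‖M‖ ≤ A := max_le hA <| (Matrix.norm_le_iff (by linarith)).2 fun r j ↦ by
      simpa only [M, Matrix.of_apply, Int.norm_eq_abs] using hg r.1 j r.2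
    have hexp : (0 : ℝ) ≤ Fintype.card ι * f.natDegree /
        (Fintype.card κ - Fintype.card ι * f.natDegree) := by
      have : (Fintype.card ι * f.natDegree : ℝ) < Fintype.card κ := by exact_mod_cast hlt
      exact div_nonneg (by positivity) (by linarith)
    calc |(t j : ℝ)| = ‖t j‖ := (Int.norm_eq_abs _).symm
      _ ≤ ‖t‖ := norm_le_pi_norm t j
      _ ≤ _ := hnorm
      _ ≤ _ := by gcongr

theorem hasseDeriv_X_pow {R : Type*} [Semiring R] (j i : ℕ) :
    hasseDeriv j (X ^ i : R[X]) = (i.choose j : R) • X ^ (i - j) := by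
  rw [← monomial_one_right_eq_X_pow, hasseDeriv_monomial, mul_one, smul_X_eq_monomial]

theorem sum_C_mul_hasseDeriv_X_pow {R : Type*} [Semiring R] [DecidableEq R] {n : ℕ} (v : Fin n → R)
    (j : ℕ) : ∑ i, C (v i) * hasseDeriv j (X ^ (i : ℕ)) = hasseDeriv j (ofFn n v) := by
  rw [ofFn_eq_sum_monomial, map_sum]
  exact Finset.sum_congr rfl fun i _ ↦ by
    rw [← smul_eq_C_mul, ← map_smul, smul_X_eq_monomial]

theorem abs_coeff_hasseDeriv_X_pow_modByMonic_le {f : ℤ[X]} {B : ℝ} (hB : 1 ≤ B)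
    (h : ∀ i k, |((X ^ i %ₘ f).coeff k : ℝ)| ≤ B ^ i) {i n : ℕ} (hi : i < n) (j : ℕ)
    {e : ℕ} (he : e ≤ 1) (k : ℕ) :
    |((X ^ e * hasseDeriv j (X ^ i) %ₘ f).coeff k : ℝ)| ≤ (2 * B) ^ n := by
  rw [hasseDeriv_X_pow, mul_smul_comm, ← pow_add, smul_modByMonic, coeff_smul, smul_eq_mul,
    Int.cast_mul, abs_mul, mul_pow]
  refine mul_le_mul ?_ ((h _ k).trans (pow_le_pow_right₀ hB (by omega))) (abs_nonneg _)
    (by positivity)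
  rw [Int.cast_natCast, Nat.abs_cast]
  exact_mod_cast (Nat.choose_le_two_pow i j).trans (Nat.pow_le_pow_right two_pos hi.le)

theorem abs_coeff_ofFn_le {n : ℕ} {v : Fin n → ℤ} {H : ℝ} (hH : 0 ≤ H) (h : ∀ i, |(v i : ℝ)| ≤ H)
    (k : ℕ) : |((ofFn n v).coeff k : ℝ)| ≤ H := by
  rcases lt_or_ge k n with hk | hk
  · rw [ofFn_coeff_eq_val_of_lt v hk]
    exact h _
  · rwa [ofFn_coeff_eq_zero_of_ge v hk, Int.cast_zero, abs_zero]

/-- Thue's auxiliary polynomial `P(X) - Y Q(X)`, encoded as the pair `(P, Q)`: it is nonzero, both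
components have degree `< n` and coefficients of size at most `H`, and along the line `Y = α` it
vanishes at `X = α` to order at least `m`. -/
structure IsAuxiliaryPair {A : Type*} [CommRing A] (α : A) (n m : ℕ) (H : ℝ) (P Q : ℤ[X]) :
    Prop where
  ne_zero : P ≠ 0 ∨ Q ≠ 0
  natDegree_left_lt : P.natDegree < n
  natDegree_right_lt : Q.natDegree < n
  abs_coeff_left_le : ∀ i, |(P.coeff i : ℝ)| ≤ H
  abs_coeff_right_le : ∀ i, |(Q.coeff i : ℝ)| ≤ H
  pow_dvd_pencil : (X - C α) ^ m ∣ pencil P Q α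

theorem IsAuxiliaryPair.mono {A : Type*} [CommRing A] {α : A} {n m : ℕ} {H H' : ℝ} {P Q : ℤ[X]}
    (h : IsAuxiliaryPair α n m H P Q) (hH : H ≤ H') : IsAuxiliaryPair α n m H' P Q where
  __ := h
  abs_coeff_left_le i := (h.abs_coeff_left_le i).trans hH
  abs_coeff_right_le i := (h.abs_coeff_right_le i).trans hH

theorem X_sub_C_pow_dvd_pencil_of_dvd {A : Type*} [CommRing A] {f P Q : ℤ[X]} {α : A} {m : ℕ}
    (hα : aeval α f = 0) (h : ∀ j < m, f ∣ hasseDeriv j P - X * hasseDeriv j Q) :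
    (X - C α) ^ m ∣ pencil P Q α := by
  refine X_sub_C_pow_dvd_iff_hasseDeriv_eval_eq_zero.2 fun j hj ↦ ?_
  rw [hasseDeriv_pencil, pencil, eval_sub, eval_mul, eval_C, eval_map_algebraMap,
    eval_map_algebraMap]
  simpa only [map_sub, map_mul, aeval_X] using aeval_eq_zero_of_dvd_aeval_eq_zero (h j hj) hα

theorem exists_isAuxiliaryPair_of_monic {A : Type*} [CommRing A] {α : A} {f : ℤ[X]} (hf : f.Monic)
    (hα : aeval α f = 0) {B : ℝ} (hB : 1 ≤ B) (h : ∀ i k, |((X ^ i %ₘ f).coeff k : ℝ)| ≤ B ^ i)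
    {n m : ℕ} (hpos : 0 < m * f.natDegree) (hlt : m * f.natDegree < 2 * n) :
    ∃ P Q : ℤ[X], IsAuxiliaryPair α n m
      ((2 * n * (2 * B) ^ n) ^ ((m * f.natDegree : ℝ) / (2 * n - m * f.natDegree))) P Q := by
  have hcard : Fintype.card (Fin 2 × Fin n) = 2 * n := by simp
  obtain ⟨t, ht0, htf, ht⟩ := exists_ne_zero_dvd_sum_C_mul hf
    (fun (j : Fin m) (i : Fin 2 × Fin n) ↦ X ^ (i.1 : ℕ) * hasseDeriv j (X ^ (i.2 : ℕ)))
    (A := (2 * B) ^ n) (one_le_pow₀ (by linarith))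
    (fun j i k ↦ abs_coeff_hasseDeriv_X_pow_modByMonic_le hB h i.2.is_lt j (by omega) k)
    (by rwa [Fintype.card_fin]) (by rwa [Fintype.card_fin, hcard])
  rw [hcard, Fintype.card_fin] at ht
  push_cast at ht
  set H := (2 * n * (2 * B) ^ n) ^ ((m * f.natDegree : ℝ) / (2 * n - m * f.natDegree))
  have hH : 0 ≤ H := by positivity
  refine ⟨ofFn n fun i ↦ t (0, i), ofFn n fun i ↦ -t (1, i), ?_, ofFn_natDegree_lt (by omega) _,
    ofFn_natDegree_lt (by omega) _, abs_coeff_ofFn_le hH fun i ↦ ht _,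
    abs_coeff_ofFn_le hH fun i ↦ by simpa using ht (1, i),
    X_sub_C_pow_dvd_pencil_of_dvd hα fun j hj ↦ ?_⟩
  · by_contra! hzero
    refine ht0 (funext fun ⟨e, i⟩ ↦ ?_)
    have h0 := congrFun (injective_ofFn n (hzero.1.trans (ofFn_zero n).symm)) i
    have h1 := congrFun (injective_ofFn n (hzero.2.trans (ofFn_zero n).symm)) i
    fin_cases e
    · exact h0
    · exact neg_eq_zero.1 h1
  · convert htf ⟨j, hj⟩ using 1
    simp only [Fintype.sum_prod_type, Fin.sum_univ_two, ← sum_C_mul_hasseDeriv_X_pow, C_neg,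
      neg_mul, Finset.sum_neg_distrib, mul_neg, sub_neg_eq_add, Finset.mul_sum, Fin.val_zero,
      pow_zero, one_mul, Fin.val_one, pow_one, mul_left_comm X]

theorem two_mul_le_two_pow (n : ℕ) : 2 * n ≤ 2 ^ n := by
  cases n with
  | zero => simp
  | succ n => have := n.lt_two_pow_self; omega

theorem exists_forall_isAuxiliaryPair_of_monic {A : Type*} [CommRing A] {α : A} {f : ℤ[X]}
    (hf : f.Monic) (hα : aeval α f = 0) {d : ℕ} (hd : f.natDegree = d) (hd0 : 1 ≤ d) {K : ℕ}
    (hK : 1 ≤ K) : ∃ C : ℝ, 1 ≤ C ∧ ∀ s, 1 ≤ s →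
      ∃ P Q : ℤ[X], IsAuxiliaryPair α ((d * K + 1) * s) (2 * K * s) (C ^ s) P Q := by
  obtain ⟨B, hB1, hB⟩ := exists_abs_coeff_X_pow_modByMonic_le hf
  refine ⟨((4 * B) ^ (d * K + 1)) ^ (d * K), one_le_pow₀ (one_le_pow₀ (by linarith)),
    fun s hs ↦ ?_⟩
  set n := (d * K + 1) * s with hn
  have hcard : 2 * n = 2 * K * s * d + 2 * s := by rw [hn]; ring
  -- The choice of `n` and `m` makes Siegel's exponent independent of `s`.
  have hexp : ((2 * K * s : ℕ) * d : ℝ) / (2 * n - (2 * K * s : ℕ) * d) = (d * K : ℕ) := by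
    have hden : (2 * n - (2 * K * s : ℕ) * d : ℝ) = 2 * s := by
      rw [sub_eq_iff_eq_add']
      exact_mod_cast hcard
    rw [hden, div_eq_iff (by positivity)]
    push_cast
    ring
  have hbase : 2 * n * (2 * B) ^ n ≤ (4 * B) ^ n :=
    calc 2 * n * (2 * B) ^ n ≤ 2 ^ n * (2 * B) ^ n := by
          gcongr; exact_mod_cast two_mul_le_two_pow n
      _ = (4 * B) ^ n := by rw [← mul_pow, ← mul_assoc]; norm_num
  obtain ⟨P, Q, hPQ⟩ := exists_isAuxiliaryPair_of_monic hf hα hB1 hB (n := n) (m := 2 * K * s)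
    (by rw [hd]; positivity) (by rw [hd]; omega)
  refine ⟨P, Q, hPQ.mono ?_⟩
  rw [hd, hexp, Real.rpow_natCast]
  calc (2 * n * (2 * B) ^ n) ^ (d * K) ≤ ((4 * B) ^ n) ^ (d * K) := by gcongr
    _ = (((4 * B) ^ (d * K + 1)) ^ (d * K)) ^ s := by rw [hn]; ring

theorem exists_monic_aeval_algebraMap_mul_eq_zero {R K L : Type*} [CommRing R] [IsDomain R]
    [Field K] [Algebra R K] [IsFractionRing R K] [Field L] [Algebra R L] [Algebra K L]
    [IsScalarTower R K L] {p : K[X]} (hp : p ≠ 0) {α : L} (hα : aeval α p = 0) :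
    ∃ b : R, b ≠ 0 ∧ ∃ f : R[X], f.Monic ∧ f.natDegree = p.natDegree ∧
      aeval (algebraMap R L b * α) f = 0 := by
  have hinj : Function.Injective (algebraMap R L) := by
    rw [IsScalarTower.algebraMap_eq R K L]
    exact (algebraMap K L).injective.comp (IsFractionRing.injective R K)
  obtain ⟨c, hc, hmap⟩ := IsLocalization.integerNormalization_spec (nonZeroDivisors R) p
  set g := IsLocalization.integerNormalization (nonZeroDivisors R) p
  have hg : g ≠ 0 := IsFractionRing.integerNormalization_eq_zero_iff.not.2 hp
  have hgα : aeval α g = 0 := IsLocalization.integerNormalization_aeval_eq_zero _ p hα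
  refine ⟨g.leadingCoeff, leadingCoeff_ne_zero.2 hg, g.integralNormalization,
    monic_integralNormalization hg, ?_, integralNormalization_aeval_eq_zero hgα
      fun x hx ↦ (map_eq_zero_iff _ hinj).1 hx⟩
  have hinjK := IsFractionRing.injective R K
  rw [natDegree_integralNormalization, ← natDegree_map_eq_of_injective hinjK, hmap,
    algebra_compatible_smul K,
    natDegree_smul _ ((map_ne_zero_iff _ hinjK).2 (nonZeroDivisors.ne_zero hc))]

theorem IsAuxiliaryPair.comp_C_mul_X {A : Type*} [CommRing A] {α : A} {b : ℤ} (hb : b ≠ 0)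
    {n m : ℕ} {H : ℝ} {P Q : ℤ[X]} (h : IsAuxiliaryPair (algebraMap ℤ A b * α) n m H P Q) :
    IsAuxiliaryPair α n m (|(b : ℝ)| ^ n * H) (P.comp (C b * X)) (C b * Q.comp (C b * X)) := by
  have hb1 : 1 ≤ |(b : ℝ)| := by exact_mod_cast Int.one_le_abs hb
  have hH : 0 ≤ H := (abs_nonneg _).trans (h.abs_coeff_left_le 0)
  have hle {F : ℤ[X]} (hF : F.natDegree < n) (hFH : ∀ i, |(F.coeff i : ℝ)| ≤ H) {e : ℕ}
      (he : e ≤ 1) (i : ℕ) : |(F.coeff i : ℝ)| * |(b : ℝ)| ^ (i + e) ≤ |(b : ℝ)| ^ n * H := by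
    rcases lt_or_ge i n with hi | hi
    · rw [mul_comm]
      exact mul_le_mul (pow_le_pow_right₀ hb1 (by omega)) (hFH i) (abs_nonneg _) (by positivity)
    · rw [coeff_eq_zero_of_natDegree_lt (hF.trans_le hi), Int.cast_zero, abs_zero, zero_mul]
      positivity
  refine ⟨?_, ?_, ?_, fun i ↦ ?_, fun i ↦ ?_, ?_⟩
  · simpa only [ne_eq, mul_eq_zero, C_eq_zero, hb, false_or,
      comp_C_mul_X_eq_zero_iff (mem_nonZeroDivisors_of_ne_zero hb)] using h.ne_zero
  · exact (natDegree_comp_le.trans (by simp [hb])).trans_lt h.natDegree_left_lt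
  · rw [natDegree_C_mul hb]
    exact (natDegree_comp_le.trans (by simp [hb])).trans_lt h.natDegree_right_lt
  · rw [comp_C_mul_X_coeff, Int.cast_mul, Int.cast_pow, abs_mul, abs_pow]
    exact hle h.natDegree_left_lt h.abs_coeff_left_le zero_le_one i
  · rw [coeff_C_mul, comp_C_mul_X_coeff, mul_left_comm, ← pow_succ', Int.cast_mul, Int.cast_pow,
      abs_mul, abs_pow]
    exact hle h.natDegree_right_lt h.abs_coeff_right_le le_rfl i
  · rw [pencil_comp_C_mul_X]
    obtain ⟨G, hG⟩ := h.pow_dvd_pencil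
    refine ⟨C (algebraMap ℤ A b) ^ m * G.comp (C (algebraMap ℤ A b) * X), ?_⟩
    simp only [hG, mul_comp, pow_comp, sub_comp, X_comp, C_comp, C_mul]
    rw [← mul_sub, mul_pow]
    ring

theorem exists_forall_isAuxiliaryPair {L : Type*} [Field L] [CharZero L] {α : L}
    (hα : IsIntegral ℚ α) {K : ℕ} (hK : 1 ≤ K) {d : ℕ} (hd : (minpoly ℚ α).natDegree = d) :
    ∃ C : ℝ, 1 ≤ C ∧ ∀ s, 1 ≤ s →
      ∃ P Q : ℤ[X], IsAuxiliaryPair α ((d * K + 1) * s) (2 * K * s) (C ^ s) P Q := by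
  obtain ⟨b, hb, f, hf, hfd, hfα⟩ := exists_monic_aeval_algebraMap_mul_eq_zero (R := ℤ)
    (minpoly.ne_zero hα) (minpoly.aeval ℚ α)
  obtain ⟨C, hC, h⟩ := exists_forall_isAuxiliaryPair_of_monic hf hfα (hfd.trans hd)
    (hd ▸ minpoly.natDegree_pos hα) hK
  have hb1 : 1 ≤ |(b : ℝ)| := by exact_mod_cast Int.one_le_abs hb
  refine ⟨|(b : ℝ)| ^ (d * K + 1) * C, one_le_mul_of_one_le_of_one_le (one_le_pow₀ hb1) hC,
    fun s hs ↦ ?_⟩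
  obtain ⟨P, Q, hPQ⟩ := h s hs
  refine ⟨_, _, (hPQ.comp_C_mul_X hb).mono ?_⟩
  rw [mul_pow _ C, ← pow_mul]

end Siegel

section Bounds

variable {R : Type*} [CommRing R] [LinearOrder R] [IsStrictOrderedRing R]

theorem sum_range_choose_mul_pow_le {y : R} (hy : 0 ≤ y) (n j : ℕ) :
    ∑ i ∈ Finset.range n, (i.choose j * y ^ (i - j) : R) ≤ (2 + y) ^ n := by
  have hterm (i : ℕ) : (i.choose j * y ^ (i - j) : R) ≤ (1 + y) ^ i := by
    rcases lt_or_ge i j with hij | hij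
    · rw [Nat.choose_eq_zero_of_lt hij, Nat.cast_zero, zero_mul]
      positivity
    · rw [add_pow]
      refine le_trans (by rw [one_pow, one_mul, mul_comm]) (Finset.single_le_sum
        (fun k _ ↦ by positivity) (Finset.mem_range_succ_iff.2 hij))
  refine (Finset.sum_le_sum fun i _ ↦ hterm i).trans ?_
  induction n with
  | zero => simp
  | succ n ih =>
    have hpow : (1 + y) ^ n ≤ (2 + y) ^ n * (1 + y) :=
      (pow_le_pow_left₀ (by positivity) (by gcongr; exact one_le_two) n).trans
        (le_mul_of_one_le_right (by positivity) (by linarith))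
    rw [Finset.sum_range_succ, pow_succ]
    linarith

theorem abs_hasseDeriv_eval_le {p : R[X]} {n : ℕ} (hp : p.natDegree < n) {H : R}
    (hH : ∀ i, |p.coeff i| ≤ H) (j : ℕ) (x : R) :
    |(hasseDeriv j p).eval x| ≤ H * (2 + |x|) ^ n := by
  have hH0 : 0 ≤ H := (abs_nonneg _).trans (hH 0)
  rw [hasseDeriv_eval_eq_sum_range hp]
  calc |∑ i ∈ Finset.range n, p.coeff i * (i.choose j * x ^ (i - j))|
      ≤ ∑ i ∈ Finset.range n, H * (i.choose j * |x| ^ (i - j)) :=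
        (Finset.abs_sum_le_sum_abs _ _).trans <| Finset.sum_le_sum fun i _ ↦ by
          rw [abs_mul, abs_mul, abs_pow, Nat.abs_cast]
          gcongr
          exact hH i
    _ ≤ H * (2 + |x|) ^ n := by
        rw [← Finset.mul_sum]
        gcongr
        exact sum_range_choose_mul_pow_le (abs_nonneg x) n j

theorem abs_hasseDeriv_eval_le_of_X_sub_C_pow_dvd {p : R[X]} {n : ℕ} (hp : p.natDegree < n) {H : R}
    (hH : ∀ i, |p.coeff i| ≤ H) {a b : R} {m : ℕ} (hdvd : (X - C a) ^ m ∣ p) (hab : |b - a| ≤ 1)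
    (j : ℕ) : |(hasseDeriv j p).eval b| ≤ H * (2 + |a|) ^ n * 3 ^ n * |b - a| ^ (m - j) := by
  have hH0 : 0 ≤ H := (abs_nonneg _).trans (hH 0)
  have hshift : (hasseDeriv j p).eval b = (hasseDeriv j (taylor a p)).eval (b - a) := by
    rw [← taylor_coeff, ← taylor_coeff, taylor_taylor, sub_add_cancel]
  have hterm (i : ℕ) : |(taylor a p).coeff i * (i.choose j * (b - a) ^ (i - j))| ≤
      H * (2 + |a|) ^ n * |b - a| ^ (m - j) * (i.choose j * 1 ^ (i - j)) := by
    rw [taylor_coeff]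
    rcases lt_or_ge i m with him | him
    · rw [X_sub_C_pow_dvd_iff_hasseDeriv_eval_eq_zero.1 hdvd i him, zero_mul, abs_zero]
      positivity
    · rw [abs_mul, abs_mul, abs_pow, Nat.abs_cast, one_pow, mul_one, mul_assoc _ (_ ^ (m - j)),
        mul_comm (_ ^ (m - j))]
      have hpow : |b - a| ^ (i - j) ≤ |b - a| ^ (m - j) :=
        pow_le_pow_of_le_one (abs_nonneg _) hab (by omega)
      gcongr
      exact abs_hasseDeriv_eval_le hp hH i a
  rw [hshift, hasseDeriv_eval_eq_sum_range (natDegree_taylor p a ▸ hp)]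
  refine ((Finset.abs_sum_le_sum_abs _ _).trans (Finset.sum_le_sum fun i _ ↦ hterm i)).trans ?_
  rw [← Finset.mul_sum, mul_right_comm]
  gcongr
  simpa only [show (2 + 1 : R) = 3 by norm_num] using
    sum_range_choose_mul_pow_le (zero_le_one (α := R)) n j

theorem IsAuxiliaryPair.abs_hasseDeriv_pencil_eval_le {α : ℝ} {n m : ℕ} {H : ℝ} {P Q : ℤ[X]}
    (h : IsAuxiliaryPair α n m H P Q) (j : ℕ) {x : ℝ} (hx : |x - α| ≤ 1) (y : ℝ) :
    |(hasseDeriv j (pencil P Q y)).eval x| ≤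
      (3 * (2 + |α|) ^ 2) ^ n * H * (|x - α| ^ (m - j) + |y - α|) := by
  have hα := abs_nonneg α
  have hH : 0 ≤ H := (abs_nonneg _).trans (h.abs_coeff_left_le 0)
  have hn : n ≠ 0 := (Nat.zero_le _).trans_lt h.natDegree_left_lt |>.ne'
  set p := P.map (algebraMap ℤ ℝ)
  set q := Q.map (algebraMap ℤ ℝ) with hq
  have hqn : q.natDegree < n := natDegree_map_le.trans_lt h.natDegree_right_lt
  have hqH (i : ℕ) : |q.coeff i| ≤ H := by rw [hq, coeff_map]; exact h.abs_coeff_right_le i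
  have hn' : (pencil P Q α).natDegree < n := (natDegree_sub_le _ _).trans_lt <|
    max_lt (natDegree_map_le.trans_lt h.natDegree_left_lt) ((natDegree_C_mul_le _ _).trans_lt hqn)
  have hH' (i : ℕ) : |(pencil P Q α).coeff i| ≤ H * (1 + |α|) := by
    rw [pencil, coeff_sub, coeff_C_mul, mul_one_add, mul_comm H]
    refine (abs_sub _ _).trans (add_le_add ?_ ?_)
    · rw [coeff_map]; exact h.abs_coeff_left_le i
    · rw [abs_mul]; gcongr; exact hqH i
  have hsplit : (hasseDeriv j (pencil P Q y)).eval x =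
      (hasseDeriv j (pencil P Q α)).eval x - (y - α) * (hasseDeriv j q).eval x := by
    simp only [pencil, ← smul_eq_C_mul, map_sub, map_smul, eval_sub, eval_smul, smul_eq_mul, ← hq]
    ring
  have hfirst : H * (1 + |α|) * (2 + |α|) ^ n * 3 ^ n ≤ (3 * (2 + |α|) ^ 2) ^ n * H := by
    have : 1 + |α| ≤ (2 + |α|) ^ n := le_trans (by linarith) (le_self_pow₀ (by linarith) hn)
    calc _ ≤ H * (2 + |α|) ^ n * (2 + |α|) ^ n * 3 ^ n := by gcongr
      _ = _ := by rw [mul_pow, ← pow_mul]; ring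
  have hsecond : H * (2 + |x|) ^ n ≤ (3 * (2 + |α|) ^ 2) ^ n * H := by
    have : |x| ≤ 1 + |α| := by linarith [abs_sub_abs_le_abs_sub x α]
    rw [mul_comm]
    gcongr
    nlinarith
  rw [hsplit, mul_add]
  refine (abs_sub _ _).trans (add_le_add ?_ ?_)
  · exact (abs_hasseDeriv_eval_le_of_X_sub_C_pow_dvd hn' hH' h.pow_dvd_pencil hx j).trans
      (by gcongr)
  · rw [abs_mul, mul_comm]
    gcongr
    exact (abs_hasseDeriv_eval_le hqn hqH j x).trans hsecond

theorem one_le_pow_mul_abs_hasseDeriv_pencil_eval {P Q : ℤ[X]} {n : ℕ} (hP : P.natDegree < n)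
    (hQ : Q.natDegree < n) (j : ℕ) {p₁ q₁ p₂ q₂ : ℤ} (hq₁ : 1 ≤ q₁) (hq₂ : 1 ≤ q₂)
    (hne : (hasseDeriv j (pencil P Q (p₂ / q₂ : ℝ))).eval (p₁ / q₁ : ℝ) ≠ 0) :
    1 ≤ (q₁ : ℝ) ^ n * q₂ * |(hasseDeriv j (pencil P Q (p₂ / q₂ : ℝ))).eval (p₁ / q₁ : ℝ)| := by
  have hq₁' : (1 : ℝ) ≤ q₁ := by exact_mod_cast hq₁
  have hq₂' : (0 : ℝ) < q₂ := by exact_mod_cast hq₂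
  set T : ℤ[X] := hasseDeriv j (C q₂ * P - C p₂ * Q) with hT
  have hTn : T.natDegree ≤ n :=
    (natDegree_hasseDeriv_le _ _).trans <| (Nat.sub_le _ _).trans <|
      (natDegree_sub_le _ _).trans <| max_le ((natDegree_C_mul_le _ _).trans hP.le)
        ((natDegree_C_mul_le _ _).trans hQ.le)
  have hTmap : T.map (algebraMap ℤ ℝ) =
      C (q₂ : ℝ) * hasseDeriv j (pencil P Q (p₂ / q₂ : ℝ)) := by
    rw [hT, map_hasseDeriv, ← smul_eq_C_mul (q₂ : ℝ), ← map_smul, smul_eq_C_mul, pencil, mul_sub,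
      ← mul_assoc, ← C_mul, mul_div_cancel₀ _ hq₂'.ne']
    simp
  have key := one_le_pow_mul_abs_eval_div (K := ℝ) (f := T) (a := p₁) (b := q₁) hq₁ (by
    rw [hTmap, eval_mul, eval_C]
    exact mul_ne_zero hq₂'.ne' hne)
  rw [hTmap, eval_mul, eval_C, abs_mul, abs_of_pos hq₂', ← mul_assoc] at key
  exact key.trans (by gcongr)

end Bounds

section Gap

theorem IsAuxiliaryPair.one_le_of_two_le_natDegree {α : ℝ} (hα : IsIntegral ℚ α)
    (hd : 2 ≤ (minpoly ℚ α).natDegree) {n m J : ℕ} {H : ℝ} {P Q : ℤ[X]}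
    (h : IsAuxiliaryPair α n m H P Q) (hn : n ≤ (minpoly ℚ α).natDegree * m)
    (hJ : 2 * n ≤ (minpoly ℚ α).natDegree * (m - 1) + J) {p₁ q₁ p₂ q₂ : ℤ} (hq₁ : 1 ≤ q₁)
    (hq₂ : 1 ≤ q₂) (hp₁ : |(p₁ / q₁ : ℝ) - α| ≤ 1) :
    1 ≤ (q₁ : ℝ) ^ n * q₂ * ((3 * (2 + |α|) ^ 2) ^ n * H *
      (|(p₁ / q₁ : ℝ) - α| ^ (m - J) + |(p₂ / q₂ : ℝ) - α|)) := by
  have hP := natDegree_map_le (f := algebraMap ℤ ℚ) |>.trans_lt h.natDegree_left_lt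
  have hQ := natDegree_map_le (f := algebraMap ℤ ℚ) |>.trans_lt h.natDegree_right_lt
  have hx : aeval (p₁ / q₁ : ℝ) (minpoly ℚ α) ≠ 0 := by
    have hroot := (minpoly.irreducible hα).not_isRoot_of_natDegree_ne_one (by omega)
      (x := (p₁ / q₁ : ℚ))
    have hcast : (p₁ / q₁ : ℝ) = algebraMap ℚ ℝ (p₁ / q₁) := by simp
    rwa [hcast, aeval_algebraMap_apply, coe_aeval_eq_eval, _root_.map_ne_zero]
  obtain ⟨j, hjJ, hj⟩ : ∃ j < J,
      (hasseDeriv j (pencil P Q (p₂ / q₂ : ℝ))).eval (p₁ / q₁ : ℝ) ≠ 0 := by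
    have hnot := not_X_sub_C_pow_dvd_pencil hα ((minpoly.two_le_natDegree_iff hα).1 hd)
      (P := P.map (algebraMap ℤ ℚ)) (Q := Q.map (algebraMap ℤ ℚ)) (m := m) (J := J)
      (by simpa only [ne_eq, Polynomial.map_eq_zero_iff (algebraMap ℤ ℚ).injective_int] using
        h.ne_zero) (by omega) (by omega)
      (by rw [pencil_map]; exact h.pow_dvd_pencil) (by omega) hx (p₂ / q₂ : ℝ)
    rw [pencil_map, X_sub_C_pow_dvd_iff_hasseDeriv_eval_eq_zero] at hnot
    simpa only [not_forall, exists_prop] using hnot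
  have hH : 0 ≤ H := (abs_nonneg _).trans (h.abs_coeff_left_le 0)
  have : (0 : ℝ) ≤ q₁ := by exact_mod_cast zero_le_one.trans hq₁
  have : (0 : ℝ) ≤ q₂ := by exact_mod_cast zero_le_one.trans hq₂
  have hpow : |(p₁ / q₁ : ℝ) - α| ^ (m - j) ≤ |(p₁ / q₁ : ℝ) - α| ^ (m - J) :=
    pow_le_pow_of_le_one (abs_nonneg _) hp₁ (by omega)
  refine (one_le_pow_mul_abs_hasseDeriv_pencil_eval h.natDegree_left_lt h.natDegree_right_lt j
    hq₁ hq₂ hj).trans ?_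
  gcongr
  exact (h.abs_hasseDeriv_pencil_eval_le j hp₁ _).trans (by gcongr)

theorem pow_mul_mul_pow_le_one {x y δ ρ : ℝ} {n N k : ℕ} (hx : 1 ≤ x) (hδ₀ : 0 ≤ δ)
    (hδ : δ ≤ x ^ (-(1 + ρ))) (hy : y ≤ x ^ N) (h : (n + N : ℝ) ≤ (1 + ρ) * k) :
    x ^ n * y * δ ^ k ≤ 1 := by
  have hx0 : 0 < x := by linarith
  calc x ^ n * y * δ ^ k ≤ x ^ n * x ^ N * (x ^ (-(1 + ρ))) ^ k := by gcongr
    _ = x ^ (n + N - (1 + ρ) * k) := by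
      rw [← Real.rpow_mul_natCast hx0.le, ← Real.rpow_natCast, ← Real.rpow_natCast,
        ← Real.rpow_add hx0, ← Real.rpow_add hx0]
      ring_nf
    _ ≤ 1 := Real.rpow_le_one_of_one_le_of_nonpos hx (by linarith)

theorem pow_mul_mul_le_one {x y δ ρ : ℝ} {n N : ℕ} (hx : 1 ≤ x) (hρ : 0 ≤ ρ)
    (hδ : δ ≤ y ^ (-(1 + ρ))) (hy : x ^ N ≤ y) (h : (n : ℝ) ≤ ρ * N) :
    x ^ n * y * δ ≤ 1 := by
  have hx0 : 0 < x := by linarith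
  have hy0 : 0 < y := (pow_pos hx0 N).trans_le hy
  have hpow : x ^ n ≤ y ^ ρ :=
    calc x ^ n = x ^ (n : ℝ) := (Real.rpow_natCast x n).symm
      _ ≤ x ^ (N * ρ) := Real.rpow_le_rpow_of_exponent_le hx (by linarith)
      _ = (x ^ N) ^ ρ := Real.rpow_natCast_mul hx0.le N ρ
      _ ≤ y ^ ρ := by gcongr
  calc x ^ n * y * δ ≤ x ^ n * y * y ^ (-(1 + ρ)) := by gcongr
    _ ≤ y ^ ρ * y * y ^ (-(1 + ρ)) := by gcongr
    _ = y ^ (1 + ρ) * y ^ (-(1 + ρ)) := by rw [Real.rpow_one_add' hy0.le (by linarith), mul_comm y]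
    _ = 1 := by rw [← Real.rpow_add hy0, add_neg_cancel, Real.rpow_zero]

theorem lt_four_mul_of_one_le_pow_mul {x y D a b : ℝ} {n s : ℕ} (hx : 0 < x) (hD : 0 < D)
    (hs : s ≠ 0) (ha : x ^ (n + s) * y * a ≤ 1) (hb : x ^ (n + s) * y * b ≤ 1)
    (h : 1 ≤ x ^ n * y * (D ^ s * (a + b))) : x < 4 * D := by
  have hupper : x ^ s ≤ 2 * D ^ s :=
    calc x ^ s ≤ x ^ s * (x ^ n * y * (D ^ s * (a + b))) :=
          le_mul_of_one_le_right (by positivity) h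
      _ = D ^ s * (x ^ (n + s) * y * a + x ^ (n + s) * y * b) := by ring
      _ ≤ D ^ s * (1 + 1) := by gcongr
      _ = 2 * D ^ s := by ring
  refine lt_of_pow_lt_pow_left₀ s (by positivity) (hupper.trans_lt ?_)
  have hfour : (2 : ℝ) < 4 ^ s := by linarith [le_self_pow₀ (by norm_num : (1 : ℝ) ≤ 4) hs]
  rw [mul_pow]
  gcongr

/- The bound `hK` ensures that both terms of the upper bound beat the denominator `q₁ ^ n * q₂` by
a factor `q₁ ^ s`, which absorbs the constants once `q₁` is large. -/
theorem IsAuxiliaryPair.not_approximations {α ρ : ℝ} (hα : IsIntegral ℚ α) {d : ℕ}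
    (hαd : (minpoly ℚ α).natDegree = d) (hd : 2 ≤ d) (hρ : d / 2 < ρ) {K s : ℕ}
    (hK : 2 * ρ + 5 ≤ K * (2 * ρ - d)) (hs : 2 * K + (1 + ρ) * d ≤ s) {C : ℝ} (hC : 0 < C)
    {P Q : ℤ[X]} (h : IsAuxiliaryPair α ((d * K + 1) * s) (2 * K * s) (C ^ s) P Q)
    {p₁ q₁ p₂ q₂ : ℤ}
    (hq₁ : 1 ≤ q₁) (hq₁C : 4 * ((3 * (2 + |α|) ^ 2) ^ (d * K + 1) * C) ≤ q₁)
    (h₁ : |(p₁ / q₁ : ℝ) - α| ≤ q₁ ^ (-(1 + ρ))) (hlo : q₁ ^ (2 * K * s) ≤ q₂)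
    (hhi : q₂ ≤ q₁ ^ (2 * K * (s + 1))) :
    ¬ |(p₂ / q₂ : ℝ) - α| ≤ q₂ ^ (-(1 + ρ)) := by
  intro h₂
  have hd' : (2 : ℝ) ≤ d := by exact_mod_cast hd
  have hK1 : 1 ≤ K := Nat.one_le_iff_ne_zero.2 fun h0 ↦ by
    rw [h0, Nat.cast_zero, zero_mul] at hK
    linarith
  have hs1 : 1 ≤ s := by
    have : (0 : ℝ) < s := by nlinarith [(Nat.cast_nonneg K : (0 : ℝ) ≤ K)]
    exact_mod_cast this
  have hx : (1 : ℝ) ≤ q₁ := by exact_mod_cast hq₁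
  have hq₂ : 1 ≤ q₂ := (one_le_pow₀ hq₁).trans hlo
  have hJ : 2 * ((d * K + 1) * s) ≤ d * (2 * K * s - 1) + (2 * s + d) := by
    obtain ⟨k, hk⟩ : ∃ k, 2 * K * s = k + 1 := Nat.exists_eq_add_one.2 (by positivity)
    rw [hk, Nat.add_sub_cancel]
    linear_combination d * hk
  have hone := h.one_le_of_two_le_natDegree hα (hαd ▸ hd) (J := 2 * s + d) (p₂ := p₂)
    (by rw [hαd]; nlinarith [Nat.mul_le_mul hd hK1]) (hαd ▸ hJ) hq₁ hq₂
    (h₁.trans (Real.rpow_le_one_of_one_le_of_nonpos hx (by linarith)))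
  have hterm₁ : (q₁ : ℝ) ^ ((d * K + 1) * s + s) * q₂ *
      |(p₁ / q₁ : ℝ) - α| ^ (2 * K * s - (2 * s + d)) ≤ 1 := by
    refine pow_mul_mul_pow_le_one hx (abs_nonneg _) h₁ (by exact_mod_cast hhi) ?_
    have hsub : (2 * K * s - (2 * s + d) : ℝ) ≤ (2 * K * s - (2 * s + d) : ℕ) := by
      rw [sub_le_iff_le_add]; exact_mod_cast le_tsub_add
    push_cast
    nlinarith
  have hterm₂ : (q₁ : ℝ) ^ ((d * K + 1) * s + s) * q₂ * |(p₂ / q₂ : ℝ) - α| ≤ 1 := by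
    refine pow_mul_mul_le_one hx (by linarith) h₂ (by exact_mod_cast hlo) ?_
    push_cast
    nlinarith
  refine hq₁C.not_gt (lt_four_mul_of_one_le_pow_mul (by linarith) (by positivity) (by omega)
    hterm₁ hterm₂ ?_)
  rwa [mul_pow _ C, ← pow_mul]

theorem exists_forall_lt_of_abs_div_sub_le {α ρ : ℝ} (hα : IsIntegral ℚ α)
    (hd : 2 ≤ (minpoly ℚ α).natDegree) (hρ : (minpoly ℚ α).natDegree / 2 < ρ) :
    ∃ N : ℤ, ∀ p q : ℤ, |(p / q : ℝ) - α| ≤ q ^ (-(1 + ρ)) → q < N := by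
  set d := (minpoly ℚ α).natDegree with hαd
  have hd' : (2 : ℝ) ≤ d := by exact_mod_cast hd
  obtain ⟨K, hK⟩ := exists_nat_ge ((2 * ρ + 5) / (2 * ρ - d))
  rw [div_le_iff₀ (by linarith)] at hK
  have hK1 : 1 ≤ K := Nat.one_le_iff_ne_zero.2 fun h0 ↦ by
    rw [h0, Nat.cast_zero, zero_mul] at hK
    linarith
  obtain ⟨C, hC, haux⟩ := exists_forall_isAuxiliaryPair hα hK1 hαd.symm
  obtain ⟨M, hM⟩ := exists_nat_ge (max 2 (4 * ((3 * (2 + |α|) ^ 2) ^ (d * K + 1) * C)))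
  obtain ⟨S, hS⟩ := exists_nat_ge (max 1 (2 * K + (1 + ρ) * d))
  by_contra! hunbounded
  obtain ⟨p₁, q₁, h₁, hq₁⟩ := hunbounded M
  lift q₁ to ℕ using (by omega)
  have hMq₁ : (M : ℝ) ≤ q₁ := by exact_mod_cast hq₁
  have hq₁2 : 2 ≤ q₁ := by exact_mod_cast (le_max_left _ _).trans (hM.trans hMq₁)
  obtain ⟨p₂, q₂, h₂, hq₂⟩ := hunbounded ((q₁ ^ (2 * K)) ^ S : ℕ)
  lift q₂ to ℕ using (by omega)
  have hq₂S : (q₁ ^ (2 * K)) ^ S ≤ q₂ := by exact_mod_cast hq₂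
  have hq₂0 : q₂ ≠ 0 := ((by positivity : 0 < (q₁ ^ (2 * K)) ^ S).trans_le hq₂S).ne'
  have hbase : 1 < q₁ ^ (2 * K) := Nat.one_lt_pow (by omega) (by omega)
  set s := Nat.log (q₁ ^ (2 * K)) q₂
  have hSs : (S : ℝ) ≤ s := by exact_mod_cast (Nat.le_log_iff_pow_le hbase hq₂0).2 hq₂S
  have hs1 : 1 ≤ s := by exact_mod_cast (le_max_left _ _).trans (hS.trans hSs)
  obtain ⟨P, Q, hPQ⟩ := haux s hs1
  refine hPQ.not_approximations hα hαd.symm hd hρ hK ((le_max_right _ _).trans (hS.trans hSs))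
    (by linarith) (by omega) ((le_max_right _ _).trans (hM.trans (by exact_mod_cast hMq₁)))
    h₁ ?_ ?_ h₂
  · rw [pow_mul]
    exact_mod_cast Nat.pow_log_le_self _ hq₂0
  · rw [pow_mul]
    exact_mod_cast (Nat.lt_pow_succ_log_self hbase q₂).le

theorem abs_div_sub_le_rpow_neg_iff {α ρ p q : ℝ} (hq : 0 < q) :
    |p / q - α| ≤ q ^ (-(1 + ρ)) ↔ q ^ ρ * |q * α - p| ≤ 1 := by
  have habs : q * |p / q - α| = |q * α - p| := by
    rw [← abs_of_pos hq, ← abs_mul, abs_of_pos hq, mul_sub, mul_div_cancel₀ _ hq.ne', abs_sub_comm]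
  rw [← habs, ← mul_assoc, ← Real.rpow_add_one hq.ne', add_comm ρ, Real.rpow_neg hq.le,
    ← one_div, le_div_iff₀' (Real.rpow_pos_of_pos hq _)]

theorem finite_setOf_abs_div_sub_le_one (α : ℝ) (N : ℤ) :
    {pq : ℤ × ℤ | (1 ≤ pq.2 ∧ pq.2 < N) ∧ |(pq.1 / pq.2 : ℝ) - α| ≤ 1}.Finite := by
  obtain ⟨L, hL⟩ := exists_nat_ge (N * (|α| + 1))
  refine ((Set.finite_Icc (-(L : ℤ)) L).prod (Set.finite_Icc 1 N)).subset ?_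
  rintro ⟨p, q⟩ ⟨⟨hq, hqN⟩, hpq⟩
  have hq' : (0 : ℝ) < q := by exact_mod_cast hq
  have hqN' : (q : ℝ) ≤ N := by exact_mod_cast hqN.le
  have hp : |(p : ℝ)| ≤ L :=
    calc |(p : ℝ)| = q * |(p / q : ℝ)| := by
          rw [abs_div, abs_of_pos hq', mul_div_cancel₀ _ hq'.ne']
      _ ≤ N * (|α| + 1) := by
          have hN : (0 : ℝ) ≤ N := hq'.le.trans hqN'
          gcongr
          exact (sub_le_iff_le_add'.1 ((abs_sub_abs_le_abs_sub (p / q : ℝ) α).trans hpq))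
      _ ≤ L := hL
  exact ⟨abs_le.1 (by exact_mod_cast hp), hq, hqN.le⟩

end Gap

theorem thue_theorem_general (α : ℝ) (hα : IsAlgebraic ℚ α) (hd : 2 ≤ (minpoly ℚ α).natDegree)
    (ρ : ℝ) (hρ : ((minpoly ℚ α).natDegree : ℝ) / 2 < ρ) :
    {pq : ℤ × ℤ | 1 ≤ pq.2 ∧ (pq.2 : ℝ) ^ ρ * |(pq.2 : ℝ) * α - (pq.1 : ℝ)| ≤ 1}.Finite := by
  obtain ⟨N, hN⟩ := exists_forall_lt_of_abs_div_sub_le hα.isIntegral hd hρ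
  refine (finite_setOf_abs_div_sub_le_one α N).subset ?_
  rintro ⟨p, q⟩ ⟨hq, hpq⟩
  have hq' : (1 : ℝ) ≤ q := by exact_mod_cast hq
  have hd' : (0 : ℝ) ≤ (minpoly ℚ α).natDegree := Nat.cast_nonneg _
  rw [← abs_div_sub_le_rpow_neg_iff (by linarith)] at hpq
  exact ⟨⟨hq, hN p q hpq⟩,
    hpq.trans (Real.rpow_le_one_of_one_le_of_nonpos hq' (by linarith))⟩

/-- Thue's approximation theorem: if `α` is a real algebraic number of degree `d ≥ 3` over `ℚ`
and `ρ > d/2`, then the set of integer pairs `(p, q)` with `q ≥ 1` and `q^ρ * |q·α − p| ≤ 1`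
is finite. -/
theorem thue_theorem (α : ℝ) (hα : IsAlgebraic ℚ α) (d : ℕ)
    (hd : (minpoly ℚ α).natDegree = d) (hd3 : 3 ≤ d)
    (ρ : ℝ) (hρ : (d : ℝ) / 2 < ρ) :
    {pq : ℤ × ℤ | 1 ≤ pq.2 ∧ (pq.2 : ℝ) ^ ρ * |(pq.2 : ℝ) * α - (pq.1 : ℝ)| ≤ 1}.Finite := by
  subst hd
  exact thue_theorem_general α hα (by omega) ρ hρ
end

section
/- Dyson's approximation theorem: let α be a real algebraic number of degree d over ℚ, with d ≥ 3, and let ρ be a real number with ρ > √(2d). Then the set of pairs of integers (p, q) with q ≥ 1 such that q^ρ · |q·α − p| ≤ 1 is finite. -/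
/-!
Suppose that `α`, of degree `d`, had infinitely many rational approximations `β` with
`|β - α| ≤ β.den ^ (-ρ)`, where `ρ > √(2d)`. Fix one such `γ`, with large denominator, and then `β`
with `β.den` about `γ.den ^ N` for a huge `N`. Choose `s` and `T` with
`√(2d) / 2 < s / T < ρ / 2`: by Siegel's lemma there is an integral polynomial
`F(X, Y) = ∑ Xʲ Pⱼ(Y)`, of degree at most `s` in `X` and at most `s * N` in `Y`, with small
coefficients, which vanishes at `(α, α)` to order `N * T` when `X` has weight `N` and `Y` has
weight `1`.

The polynomial `F(β, Y)` is a nonzero combination of the `s + 1` polynomials `Pⱼ`. A power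
`(Y - γ) ^ m` dividing it divides, up to `s` factors, the Wronskian of a basis of the span of the
`Pⱼ`, and by Gauss's lemma `γ.den ^ (m - s)` is at most the height of this integral Wronskian.
Hence `m - s` is at most `ε * N`, as `γ.den` is large, and some `i ≤ s + ε * N` has
`∂ᵢF(β, γ) ≠ 0`, where `∂ᵢ` is the `i`-th divided derivative in `Y`. Being rational with denominator
dividing `γ.den ^ (s * N) * β.den ^ s`, this value is not too small, while Taylor expansion at
`(α, α)` bounds it by about `γ.den ^ (-ρ * (N * T - i))`. The two estimates contradict each other
as `2 * s < ρ * T`.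
-/

open Polynomial
open scoped Polynomial.Bivariate

namespace Dyson

section Wronskian

variable {k : ℕ}

/-- The matrix whose `i`-th row lists the `i`-th derivatives of a family of `k` polynomials; its
determinant is the Wronskian of the family. -/
noncomputable def wronskianMatrix {R : Type*} [CommRing R] (φ : Fin k → R[X]) :
    Matrix (Fin k) (Fin k) R[X] :=
  Matrix.of fun i l => derivative^[(i : ℕ)] (φ l)

lemma map_det_wronskianMatrix {R S : Type*} [CommRing R] [CommRing S] (f : R →+* S)
    (φ : Fin k → R[X]) :
    (wronskianMatrix φ).det.map f = (wronskianMatrix fun l => (φ l).map f).det := by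
  rw [← coe_mapRingHom, RingHom.map_det]
  congr 1
  ext1 i l
  simp [wronskianMatrix, iterate_derivative_map]

lemma wronskianMatrix_mulVec_C {R : Type*} [CommRing R] (φ : Fin k → R[X]) (c : Fin k → R)
    (i : Fin k) :
    (wronskianMatrix φ).mulVec (fun l => C (c l)) i = derivative^[(i : ℕ)] (∑ l, c l • φ l) := by
  simp_rw [iterate_derivative_sum, iterate_derivative_smul, smul_eq_C_mul, mul_comm (C _)]
  rfl

lemma dvd_det_mul_of_dvd_mulVec {n R : Type*} [Fintype n] [DecidableEq n]
    [CommRing R] {M : Matrix n n R} {v : n → R} {d : R} (h : ∀ i, d ∣ M.mulVec v i) (j : n) :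
    d ∣ M.det * v j := by
  have hadj : M.adjugate.mulVec (M.mulVec v) = M.det • v := by
    rw [Matrix.mulVec_mulVec, Matrix.adjugate_mul, Matrix.smul_mulVec, Matrix.one_mulVec]
  have hj := congrFun hadj j
  rw [Pi.smul_apply, smul_eq_mul] at hj
  exact hj ▸ Finset.dvd_sum fun i _ => (h i).mul_left _

variable {K : Type*} [Field K]

lemma pow_sub_dvd_det_wronskianMatrix {φ : Fin k → K[X]} {c : Fin k → K} {x : K} {m : ℕ}
    (h : (X - C x) ^ m ∣ ∑ l, c l • φ l) {l : Fin k} (hl : c l ≠ 0) :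
    (X - C x) ^ (m - (k - 1)) ∣ (wronskianMatrix φ).det := by
  refine (isUnit_C.mpr hl.isUnit).dvd_mul_right.mp
    (dvd_det_mul_of_dvd_mulVec (v := fun l => C (c l)) (fun i => ?_) l)
  rw [wronskianMatrix_mulVec_C]
  exact (pow_dvd_pow _ (by omega)).trans (pow_sub_dvd_iterate_derivative_of_pow_dvd (i : ℕ) h)

lemma exists_ne_zero_isRoot_iterate_derivative {ι : Type*} [Fintype ι] (φ : ι → K[X]) (x : K)
    {m : ℕ} (hm : m < Fintype.card ι) :
    ∃ c : ι → K, c ≠ 0 ∧ ∀ i < m, (derivative^[i] (∑ l, c l • φ l)).IsRoot x := by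
  let L : (ι → K) →ₗ[K] (Fin m → K) := LinearMap.pi fun i =>
    leval x ∘ₗ (derivative ^ (i : ℕ)) ∘ₗ Fintype.linearCombination K φ
  obtain ⟨c, hcL, hc⟩ := (Submodule.ne_bot_iff _).mp
    (LinearMap.ker_ne_bot_of_finrank_lt (f := L) (by simpa using hm))
  refine ⟨c, hc, fun i hi => ?_⟩
  have := congrFun (LinearMap.mem_ker.mp hcL) ⟨i, hi⟩
  rwa [LinearMap.pi_apply, LinearMap.comp_apply, LinearMap.comp_apply,
    Fintype.linearCombination_apply, Module.End.pow_apply] at this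

variable [CharZero K]

/-- Uniqueness for a linear differential equation of order `m` at a point where its leading
coefficient does not vanish. -/
lemma eq_zero_of_sum_mul_iterate_derivative_eq_zero {a : Fin k → K[X]} {m : Fin k}
    (ha : ∀ i, m < i → a i = 0) {x : K} (hm : ¬ (a m).IsRoot x) {ψ : K[X]}
    (hψ : ∑ i, a i * derivative^[(i : ℕ)] ψ = 0)
    (hroot : ∀ i < (m : ℕ), (derivative^[i] ψ).IsRoot x) : ψ = 0 := by
  by_contra hψ0
  set v := ψ.rootMultiplicity x
  have hmv : (m : ℕ) ≤ v := by
    by_contra! hlt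
    exact lt_irrefl v ((lt_rootMultiplicity_iff_isRoot_iterate_derivative hψ0).mpr
      fun j hj => hroot j (hj.trans_lt hlt))
  have hdvd : (X - C x) ^ (v - m + 1) ∣ a m * derivative^[(m : ℕ)] ψ := by
    rw [← Finset.add_sum_erase _ _ (Finset.mem_univ m)] at hψ
    rw [eq_neg_of_add_eq_zero_left hψ, dvd_neg]
    refine Finset.dvd_sum fun i hi => ?_
    rcases lt_or_gt_of_ne (Finset.ne_of_mem_erase hi) with him | him
    · exact ((pow_dvd_pow _ (by omega)).trans (pow_sub_dvd_iterate_derivative_of_pow_dvd (i : ℕ)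
        (pow_rootMultiplicity_dvd ψ x))).mul_left _
    · simp [ha i him]
  have hdvd' : X - C x ∣ derivative^[v] ψ := by
    have := pow_sub_dvd_iterate_derivative_of_pow_dvd (v - m)
      ((prime_X_sub_C x).pow_dvd_of_dvd_mul_left _ (fun h => hm (dvd_iff_isRoot.mp h)) hdvd)
    rwa [← Function.iterate_add_apply, Nat.sub_add_cancel hmv, Nat.add_sub_cancel_left,
      pow_one] at this
  refine lt_irrefl v ((lt_rootMultiplicity_iff_isRoot_iterate_derivative hψ0).mpr fun j hj => ?_)
  rcases hj.lt_or_eq with hj | rfl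
  · exact isRoot_iterate_derivative_of_lt_rootMultiplicity hj
  · exact dvd_iff_isRoot.mp hdvd'

lemma det_wronskianMatrix_ne_zero {φ : Fin k → K[X]} (h : LinearIndependent K φ) :
    (wronskianMatrix φ).det ≠ 0 := by
  classical
  intro hdet
  obtain ⟨a, ha, haW⟩ := Matrix.exists_vecMul_eq_zero_iff.mpr hdet
  obtain ⟨i₀, hi₀⟩ := Function.ne_iff.mp ha
  obtain ⟨m, hm, hmax⟩ := Finset.exists_max_image {i | a i ≠ 0} id ⟨i₀, by simpa using hi₀⟩
  simp only [Finset.mem_filter, Finset.mem_univ, true_and, id] at hm hmax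
  obtain ⟨x, hx⟩ : ∃ x, ¬ (a m).IsRoot x := by
    by_contra! hroot
    exact hm (Polynomial.funext fun x => by simpa using hroot x)
  obtain ⟨c, hc, hcroot⟩ :=
    exists_ne_zero_isRoot_iterate_derivative φ x (m := m) (by simp)
  refine hc (funext (Fintype.linearIndependent_iff.mp h c
    (eq_zero_of_sum_mul_iterate_derivative_eq_zero (fun i hi => ?_) hx ?_ hcroot)))
  · by_contra hne
    exact (hmax i hne).not_gt hi
  · simp_rw [← wronskianMatrix_mulVec_C]
    rw [← dotProduct, Matrix.dotProduct_mulVec, haW, zero_dotProduct]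

end Wronskian

lemma isPrimitive_C_mul_X_sub_C {R : Type*} [CommRing R] {a b : R} (h : IsCoprime a b) :
    (C a * X - C b).IsPrimitive := fun r hr => by
  rw [C_dvd_iff_dvd_coeff] at hr
  exact h.isUnit_of_dvd' (by simpa [coeff_C] using hr 1) (by simpa using hr 0)

/-- Gauss's lemma for the primitive polynomial `den β * X - num β`. -/
lemma pow_den_dvd_leadingCoeff {U : ℤ[X]} {β : ℚ} {m : ℕ}
    (h : (X - C β) ^ m ∣ U.map (Int.castRingHom ℚ)) : (β.den : ℤ) ^ m ∣ U.leadingCoeff := by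
  have hden : (β.den : ℤ) ≠ 0 := mod_cast β.den_nz
  set g : ℤ[X] := C (β.den : ℤ) * X - C β.num
  have hg : g.IsPrimitive := isPrimitive_C_mul_X_sub_C (Rat.isCoprime_num_den β).symm
  have hgm : (g ^ m).IsPrimitive := by
    clear h
    induction m with
    | zero => exact pow_zero g ▸ isPrimitive_one
    | succ m ih => exact pow_succ g m ▸ ih.mul hg
  have hmap : g.map (Int.castRingHom ℚ) = C (β.den : ℚ) * (X - C β) := by
    simp only [g, Polynomial.map_sub, Polynomial.map_mul, map_X, map_C, mul_sub, ← C_mul,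
      Rat.den_mul_eq_num, Int.coe_castRingHom, Int.cast_natCast]
  have hdvd : g ^ m ∣ U := by
    rw [IsPrimitive.Int.dvd_iff_map_cast_dvd_map_cast _ _ hgm, Polynomial.map_pow, hmap, mul_pow]
    exact ((isUnit_C.mpr (IsUnit.mk0 _ (mod_cast β.den_nz))).pow m).mul_left_dvd.mpr h
  have hlc : g.leadingCoeff = β.den := by
    simpa [g, sub_eq_add_neg] using leadingCoeff_linear (b := -β.num) hden
  obtain ⟨q, rfl⟩ := hdvd
  rw [leadingCoeff_mul, leadingCoeff_pow, hlc]
  exact dvd_mul_right _ _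

section Length

variable {R : Type*} [Ring R] (v : RingSeminorm R)

lemma seminorm_sum_le {ι : Type*} (s : Finset ι) (f : ι → R) :
    v (∑ i ∈ s, f i) ≤ ∑ i ∈ s, v (f i) :=
  Finset.le_sum_of_subadditive v (map_zero v).le (map_add_le_add v) s f

/-- The `ℓ¹` seminorm of a polynomial: the sum of the seminorms of its coefficients, also known as
its length. Iterating the construction measures bivariate polynomials. -/
noncomputable def l1Seminorm : RingSeminorm R[X] :=
  let N (p : R[X]) : ℝ := p.sum fun _ a => v a
  have zero : N 0 = 0 := sum_zero_index _
  have add (p q : R[X]) : N (p + q) ≤ N p + N q := by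
    let n := max p.natDegree q.natDegree + 1
    have hp : p.natDegree < n := by omega
    have hq : q.natDegree < n := by omega
    have hpq : (p + q).natDegree < n := (natDegree_add_le p q).trans_lt (by omega)
    simp only [N, sum_over_range' _ (fun _ => map_zero v) n, hp, hq, hpq, ← Finset.sum_add_distrib,
      coeff_add]
    exact Finset.sum_le_sum fun i _ => map_add_le_add v _ _
  { toFun := N
    map_zero' := zero
    add_le' := add
    neg' := fun p => by simp [N, sum_def]
    mul_le' := fun p q => by
      rw [mul_eq_sum_sum]
      simp only [sum_def]
      refine (Finset.le_sum_of_subadditive N zero.le add _ _).trans ?_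
      simp only [N, sum_def p, Finset.sum_mul]
      refine Finset.sum_le_sum fun i _ =>
        (Finset.le_sum_of_subadditive N zero.le add _ _).trans ?_
      simp only [N, sum_def q, Finset.mul_sum]
      refine Finset.sum_le_sum fun j _ => ?_
      rw [sum_monomial_index _ _ (map_zero v)]
      exact map_mul_le_mul v _ _ }

lemma l1Seminorm_eq_sum_range {p : R[X]} {n : ℕ} (h : p.natDegree < n) :
    l1Seminorm v p = ∑ i ∈ Finset.range n, v (p.coeff i) :=
  sum_over_range' _ (fun _ => map_zero v) n h

@[simp]
lemma l1Seminorm_monomial (n : ℕ) (a : R) : l1Seminorm v (monomial n a) = v a :=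
  sum_monomial_index _ _ (map_zero v)

lemma seminorm_coeff_le_l1Seminorm (p : R[X]) (n : ℕ) : v (p.coeff n) ≤ l1Seminorm v p := by
  rw [l1Seminorm_eq_sum_range v (show p.natDegree < p.natDegree + n + 1 by omega)]
  exact Finset.single_le_sum (f := fun i => v (p.coeff i)) (fun i _ => apply_nonneg v _)
    (Finset.mem_range.mpr (by omega))

variable {v}

lemma seminorm_map_le_mul_l1Seminorm {S : Type*} [Ring S] {w : RingSeminorm S} (L : R[X] →+ S)
    {p : R[X]} {c : ℝ}
    (h : ∀ n ≤ p.natDegree, w (L (monomial n (p.coeff n))) ≤ c * v (p.coeff n)) :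
    w (L p) ≤ c * l1Seminorm v p := by
  conv_lhs => rw [p.as_sum_range, map_sum]
  rw [l1Seminorm_eq_sum_range v p.natDegree.lt_succ_self, Finset.mul_sum]
  exact (seminorm_sum_le w _ _).trans (Finset.sum_le_sum fun n hn =>
    h n (Nat.lt_succ_iff.mp (Finset.mem_range.mp hn)))

lemma seminorm_natCast_mul_le (v : RingSeminorm R) (n : ℕ) (a : R) : v (n * a) ≤ n * v a := by
  induction n with
  | zero => simp
  | succ n ih =>
    push_cast
    rw [add_mul, add_mul, one_mul, one_mul]
    exact (map_add_le_add v _ _).trans (by gcongr)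

lemma l1Seminorm_map_le {S : Type*} [Ring S] {w : RingSeminorm S} (f : R →+* S) {p : R[X]} {c : ℝ}
    (h : ∀ n, w (f (p.coeff n)) ≤ c * v (p.coeff n)) :
    l1Seminorm w (p.map f) ≤ c * l1Seminorm v p :=
  seminorm_map_le_mul_l1Seminorm (mapRingHom f).toAddMonoidHom fun n _ => by simpa using h n

lemma l1Seminorm_derivative_le {p : R[X]} {D : ℕ} (hp : p.natDegree ≤ D) :
    l1Seminorm v (derivative p) ≤ D * l1Seminorm v p := by
  refine seminorm_map_le_mul_l1Seminorm (derivative (R := R)).toAddMonoidHom fun n hn => ?_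
  calc l1Seminorm v (derivative (monomial n (p.coeff n)))
      ≤ n * v (p.coeff n) := by
        rw [derivative_monomial, l1Seminorm_monomial, ← Nat.cast_comm]
        exact seminorm_natCast_mul_le v _ _
    _ ≤ D * v (p.coeff n) := by
        have := hn.trans hp
        gcongr

lemma l1Seminorm_iterate_derivative_le {p : R[X]} {D : ℕ} (hp : p.natDegree ≤ D) (i : ℕ) :
    l1Seminorm v (derivative^[i] p) ≤ D ^ i * l1Seminorm v p := by
  induction i with
  | zero => simp
  | succ i ih =>
    rw [Function.iterate_succ_apply', pow_succ', mul_assoc]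
    have hdeg := (natDegree_iterate_derivative p i).trans (Nat.sub_le _ _)
    exact (l1Seminorm_derivative_le (hdeg.trans hp)).trans (by gcongr)

lemma l1Seminorm_hasseDeriv_le {p : R[X]} {D : ℕ} (hp : p.natDegree ≤ D) (i : ℕ) :
    l1Seminorm v (hasseDeriv i p) ≤ 2 ^ D * l1Seminorm v p := by
  refine seminorm_map_le_mul_l1Seminorm (hasseDeriv i).toAddMonoidHom fun n hn => ?_
  have hchoose : (n.choose i : ℝ) ≤ 2 ^ D := by
    exact_mod_cast (n.choose_le_two_pow i).trans (Nat.pow_le_pow_right two_pos (hn.trans hp))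
  calc l1Seminorm v (hasseDeriv i (monomial n (p.coeff n)))
      ≤ n.choose i * v (p.coeff n) := by
        rw [hasseDeriv_monomial, l1Seminorm_monomial]
        exact seminorm_natCast_mul_le v _ _
    _ ≤ 2 ^ D * v (p.coeff n) := by gcongr

end Length

section CommLength

variable {R : Type*} [CommRing R] {v : RingSeminorm R}

lemma l1Seminorm_one_le (hv : v 1 ≤ 1) : l1Seminorm v 1 ≤ 1 := by
  rwa [← monomial_zero_one, l1Seminorm_monomial]

lemma l1Seminorm_taylor_le (hv : v 1 ≤ 1) {p : R[X]} {D : ℕ} (hp : p.natDegree ≤ D) (r : R) :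
    l1Seminorm v (taylor r p) ≤ (1 + v r) ^ D * l1Seminorm v p := by
  refine seminorm_map_le_mul_l1Seminorm (taylor r).toAddMonoidHom fun n hn => ?_
  have hXC : l1Seminorm v (X + C r) ≤ 1 + v r := by
    refine (map_add_le_add _ _ _).trans (add_le_add ?_ ?_)
    · rwa [← monomial_one_one_eq_X, l1Seminorm_monomial]
    · rw [← monomial_zero_left, l1Seminorm_monomial]
  calc l1Seminorm v (taylor r (monomial n (p.coeff n)))
      ≤ v (p.coeff n) * l1Seminorm v ((X + C r) ^ n) := by
        rw [taylor_monomial]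
        refine (map_mul_le_mul _ _ _).trans_eq ?_
        rw [← monomial_zero_left, l1Seminorm_monomial]
    _ ≤ v (p.coeff n) * (1 + v r) ^ n := by
        gcongr
        exact (map_pow_le_pow' (l1Seminorm_one_le hv) _ _).trans (by gcongr)
    _ ≤ v (p.coeff n) * (1 + v r) ^ D := by
        have := hn.trans hp
        gcongr
        linarith [apply_nonneg v r]
    _ = (1 + v r) ^ D * v (p.coeff n) := mul_comm _ _

lemma seminorm_prod_le (hv : v 1 ≤ 1) {ι : Type*} (s : Finset ι) (f : ι → R) :
    v (∏ i ∈ s, f i) ≤ ∏ i ∈ s, v (f i) := by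
  induction s using Finset.cons_induction with
  | empty => simpa using hv
  | cons a s ha ih =>
    rw [Finset.prod_cons, Finset.prod_cons]
    exact (map_mul_le_mul v _ _).trans (by gcongr)

lemma seminorm_det_le (hv : v 1 ≤ 1) {n : Type*} [Fintype n] [DecidableEq n] {M : Matrix n n R}
    {A : ℝ} (hM : ∀ i j, v (M i j) ≤ A) :
    v M.det ≤ (Fintype.card n).factorial * A ^ Fintype.card n := by
  rw [Matrix.det_apply]
  calc v (∑ σ : Equiv.Perm n, Equiv.Perm.sign σ • ∏ i, M (σ i) i)
      ≤ ∑ σ : Equiv.Perm n, v (∏ i, M (σ i) i) := by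
        refine (seminorm_sum_le v _ _).trans (Finset.sum_le_sum fun σ _ => ?_)
        rcases Int.units_eq_one_or (Equiv.Perm.sign σ) with h | h <;> simp [h]
    _ ≤ ∑ _σ : Equiv.Perm n, A ^ Fintype.card n := by
        refine Finset.sum_le_sum fun σ _ => (seminorm_prod_le hv _ _).trans ?_
        exact (Finset.prod_le_prod (fun i _ => apply_nonneg v _) fun i _ => hM (σ i) i).trans_eq
          (by rw [Finset.prod_const, Finset.card_univ])
    _ = (Fintype.card n).factorial * A ^ Fintype.card n := by
        rw [Finset.sum_const, Finset.card_univ, Fintype.card_perm, nsmul_eq_mul]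

lemma X_mul_modByMonic [Nontrivial R] {g : R[X]} (hg : g.Monic) (p : R[X]) :
    (X * p) %ₘ g = X * (p %ₘ g) - C ((p %ₘ g).coeff (g.natDegree - 1)) * g := by
  set r := p %ₘ g
  set c := r.coeff (g.natDegree - 1)
  refine (div_modByMonic_unique (X * (p /ₘ g) + C c) _ hg ⟨?_, ?_⟩).2
  · linear_combination X * modByMonic_add_div p g
  · rw [degree_eq_natDegree hg.ne_zero, degree_lt_iff_coeff_zero]
    have hdeg : ∀ n, g.natDegree ≤ n → r.coeff n = 0 := by
      rw [← degree_lt_iff_coeff_zero, ← degree_eq_natDegree hg.ne_zero]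
      exact degree_modByMonic_lt p hg
    rintro (_ | n) hn
    · simp [c, hdeg _ (show g.natDegree ≤ g.natDegree - 1 by omega)]
    · rw [coeff_sub, coeff_X_mul, coeff_C_mul]
      rcases hn.eq_or_lt with hn | hn
      · have hlead : g.coeff (n + 1) = 1 := hn ▸ hg
        simp [c, hn, hlead]
      · simp [hdeg n (Nat.lt_succ_iff.mp hn), coeff_eq_zero_of_natDegree_lt hn]

lemma l1Seminorm_X_pow_modByMonic_le [Nontrivial R] (hv : v 1 ≤ 1) {g : R[X]} (hg : g.Monic)
    (m : ℕ) : l1Seminorm v (X ^ m %ₘ g) ≤ (1 + l1Seminorm v g) ^ m := by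
  induction m with
  | zero =>
    rw [pow_zero, pow_zero]
    rcases eq_or_ne g 1 with rfl | hg1
    · simp
    · rw [(modByMonic_eq_self_iff hg).mpr (by simpa using hg.degree_pos.mpr hg1)]
      exact l1Seminorm_one_le hv
  | succ m ih =>
    set r := X ^ m %ₘ g
    have hX : l1Seminorm v (X * r) ≤ l1Seminorm v r := by
      refine (map_mul_le_mul _ _ _).trans (mul_le_of_le_one_left (apply_nonneg _ _) ?_)
      rwa [← monomial_one_one_eq_X, l1Seminorm_monomial]
    have hC : l1Seminorm v (C (r.coeff (g.natDegree - 1)) * g) ≤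
        l1Seminorm v r * l1Seminorm v g := by
      refine (map_mul_le_mul _ _ _).trans ?_
      rw [← monomial_zero_left, l1Seminorm_monomial]
      gcongr
      exact seminorm_coeff_le_l1Seminorm v _ _
    rw [pow_succ', X_mul_modByMonic hg]
    calc _ ≤ l1Seminorm v r + l1Seminorm v r * l1Seminorm v g :=
          (map_sub_le_add _ _ _).trans (add_le_add hX hC)
      _ = l1Seminorm v r * (1 + l1Seminorm v g) := by ring
      _ ≤ _ := by rw [pow_succ]; gcongr

end CommLength

section Multiplicity

/-- The length of a polynomial over a seminormed ring. -/
noncomputable abbrev l1Norm (R : Type*) [SeminormedRing R] : RingSeminorm R[X] :=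
  l1Seminorm (normRingSeminorm R)

/-- The length of a bivariate polynomial over a seminormed ring. -/
noncomputable abbrev l1Norm₂ (R : Type*) [SeminormedRing R] : RingSeminorm R[X][Y] :=
  l1Seminorm (l1Norm R)

lemma normRingSeminorm_one_le (R : Type*) [SeminormedRing R] [NormOneClass R] :
    normRingSeminorm R 1 ≤ 1 :=
  norm_one.le

lemma abs_leadingCoeff_le_l1Norm (U : ℤ[X]) : (|U.leadingCoeff| : ℝ) ≤ l1Norm ℤ U := by
  rw [← Int.norm_eq_abs]
  exact seminorm_coeff_le_l1Seminorm (normRingSeminorm ℤ) U U.natDegree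

lemma pow_den_le_l1Norm {U : ℤ[X]} (hU : U ≠ 0) {β : ℚ} {m : ℕ}
    (h : (X - C β) ^ m ∣ U.map (Int.castRingHom ℚ)) : (β.den : ℝ) ^ m ≤ l1Norm ℤ U := by
  have hle := Int.le_of_dvd (abs_pos.mpr (leadingCoeff_ne_zero.mpr hU))
    ((dvd_abs _ _).mpr (pow_den_dvd_leadingCoeff h))
  exact le_trans (mod_cast hle) (abs_leadingCoeff_le_l1Norm U)

lemma pow_den_le_of_linearIndependent {k : ℕ} {φ : Fin k → ℤ[X]}
    (hφ : LinearIndependent ℚ fun l => (φ l).map (Int.castRingHom ℚ)) {D : ℕ} {B : ℝ} (hD : 1 ≤ D)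
    (hdeg : ∀ l, (φ l).natDegree ≤ D) (hB : ∀ l, l1Norm ℤ (φ l) ≤ B) {c : Fin k → ℚ} {l : Fin k}
    (hl : c l ≠ 0) {β : ℚ} {m : ℕ}
    (h : (X - C β) ^ m ∣ ∑ l, c l • (φ l).map (Int.castRingHom ℚ)) :
    (β.den : ℝ) ^ (m - (k - 1)) ≤ k.factorial * (D ^ (k - 1) * B) ^ k := by
  have hmap := map_det_wronskianMatrix (Int.castRingHom ℚ) φ
  have hdet : (wronskianMatrix φ).det ≠ 0 := by
    intro h0
    rw [h0, Polynomial.map_zero] at hmap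
    exact det_wronskianMatrix_ne_zero hφ hmap.symm
  have hentry : ∀ i l, l1Norm ℤ (wronskianMatrix φ i l) ≤ D ^ (k - 1) * B := fun i l =>
    calc l1Norm ℤ (derivative^[(i : ℕ)] (φ l))
        ≤ D ^ (i : ℕ) * l1Norm ℤ (φ l) := l1Seminorm_iterate_derivative_le (hdeg l) i
      _ ≤ D ^ (k - 1) * B := by
        have hi : (i : ℕ) ≤ k - 1 := by omega
        have hD' : (1 : ℝ) ≤ D := mod_cast hD
        gcongr
        exact hB l
  have hbound := seminorm_det_le (l1Seminorm_one_le (normRingSeminorm_one_le ℤ)) hentry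
  rw [Fintype.card_fin] at hbound
  exact (pow_den_le_l1Norm hdet (hmap ▸ pow_sub_dvd_det_wronskianMatrix h hl)).trans hbound

lemma exists_fin_linearIndependent {ι K V : Type*} [Fintype ι] [DivisionRing K] [AddCommGroup V]
    [Module K V] (v : ι → V) :
    ∃ k ≤ Fintype.card ι, ∃ a : Fin k → ι, LinearIndependent K (v ∘ a) ∧
      Submodule.span K (Set.range (v ∘ a)) = Submodule.span K (Set.range v) := by
  obtain ⟨κ, a, hinj, hspan, hli⟩ := exists_linearIndependent' K v
  have := Fintype.ofInjective a hinj
  let e : Fin (Fintype.card κ) ≃ κ := (Fintype.equivFin κ).symm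
  exact ⟨Fintype.card κ, Fintype.card_le_of_injective a hinj, a ∘ e, hli.comp e e.injective,
    by rw [← Function.comp_assoc, e.surjective.range_comp, hspan]⟩

lemma pow_den_rootMultiplicity_le {s : ℕ} {P : Fin (s + 1) → ℤ[X]} {D : ℕ} {B : ℝ} (hD : 1 ≤ D)
    (hdeg : ∀ j, (P j).natDegree ≤ D) (hB : ∀ j, l1Norm ℤ (P j) ≤ B) (hB1 : 1 ≤ B) {ψ : ℚ[X]}
    (hψ : ψ ∈ Submodule.span ℚ (Set.range fun j => (P j).map (Int.castRingHom ℚ)))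
    (hψ0 : ψ ≠ 0) (β : ℚ) :
    (β.den : ℝ) ^ (ψ.rootMultiplicity β - s) ≤ (s + 1).factorial * (D ^ s * B) ^ (s + 1) := by
  obtain ⟨k, hk, a, hli, hspan⟩ :=
    exists_fin_linearIndependent (K := ℚ) fun j => (P j).map (Int.castRingHom ℚ)
  rw [Fintype.card_fin] at hk
  obtain ⟨c, hc⟩ := (Submodule.mem_span_range_iff_exists_fun ℚ).mp (hspan ▸ hψ)
  obtain ⟨l, hl⟩ : ∃ l, c l ≠ 0 := by
    by_contra! hzero
    simp [← hc, hzero] at hψ0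
  have hD' : (1 : ℝ) ≤ D := mod_cast hD
  have hden : (1 : ℝ) ≤ β.den := mod_cast β.den_pos
  have hks : k - 1 ≤ s := by omega
  calc (β.den : ℝ) ^ (ψ.rootMultiplicity β - s)
      ≤ β.den ^ (ψ.rootMultiplicity β - (k - 1)) := by gcongr
    _ ≤ k.factorial * (D ^ (k - 1) * B) ^ k :=
      pow_den_le_of_linearIndependent hli hD (fun l => hdeg (a l)) (fun l => hB (a l)) hl
        ((pow_rootMultiplicity_dvd ψ β).trans hc.symm.dvd)
    _ ≤ (s + 1).factorial * (D ^ s * B) ^ k := by gcongr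
    _ ≤ (s + 1).factorial * (D ^ s * B) ^ (s + 1) := by
      gcongr
      exact one_le_mul_of_one_le_of_one_le (one_le_pow₀ hD') hB1

end Multiplicity

section Specialization

lemma coeff_coeff_swap {R : Type*} [CommSemiring R] (F : R[X][Y]) (i j : ℕ) :
    ((Bivariate.swap F).coeff i).coeff j = (F.coeff j).coeff i := by
  induction F using Polynomial.induction_on' with
  | add F G hF hG => simp [hF, hG]
  | monomial n p =>
    induction p using Polynomial.induction_on' with
    | add p q hp hq => simp [hp, hq]
    | monomial m a =>
      simp only [Bivariate.swap_monomial_monomial, coeff_monomial]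
      split_ifs <;> simp [coeff_monomial, *]

/-- The univariate polynomial `F(x, Y)`. -/
noncomputable def specialize {R A : Type*} [CommSemiring R] [CommSemiring A] [Algebra R A] (x : A) :
    R[X][Y] →ₐ[R] A[X] :=
  mapAlgHom (aeval x)

@[simp]
lemma coeff_specialize {R A : Type*} [CommSemiring R] [CommSemiring A] [Algebra R A] (x : A)
    (F : R[X][Y]) (n : ℕ) : (specialize x F).coeff n = aeval x (F.coeff n) :=
  coeff_map _ n

lemma hasseDeriv_map {R S : Type*} [Semiring R] [Semiring S] (f : R →+* S) (p : R[X]) (i : ℕ) :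
    hasseDeriv i (p.map f) = (hasseDeriv i p).map f := by
  ext n
  simp [hasseDeriv_coeff]

lemma hasseDeriv_specialize {R A : Type*} [CommSemiring R] [CommSemiring A] [Algebra R A] (x : A)
    (F : R[X][Y]) (i : ℕ) :
    hasseDeriv i (specialize x F) = specialize x (hasseDeriv i F) :=
  hasseDeriv_map _ F i

lemma natDegree_coeff_hasseDeriv_le {R : Type*} [Semiring R] (F : R[X][Y]) (i n : ℕ) :
    ((hasseDeriv i F).coeff n).natDegree ≤ (F.coeff (n + i)).natDegree := by
  rw [hasseDeriv_coeff, ← nsmul_eq_mul]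
  exact natDegree_smul_le _ _

lemma natDegree_specialize_le {R A : Type*} [CommSemiring R] [CommSemiring A] [Algebra R A] (x : A)
    (F : R[X][Y]) : (specialize x F).natDegree ≤ F.natDegree :=
  natDegree_map_le

lemma specialize_mem_span {R A : Type*} [CommSemiring R] [CommSemiring A] [Algebra R A] (x : A)
    {F : R[X][Y]} {s : ℕ} (hF : ∀ n, (F.coeff n).natDegree ≤ s) :
    specialize x F ∈ Submodule.span A (Set.range fun j : Fin (s + 1) =>
      ((Bivariate.swap F).coeff j).map (algebraMap R A)) := by
  have hsum : specialize x F = ∑ j : Fin (s + 1),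
      x ^ (j : ℕ) • ((Bivariate.swap F).coeff j).map (algebraMap R A) := by
    ext n
    rw [coeff_specialize, aeval_eq_sum_range' (Nat.lt_succ_of_le (hF n)), finsetSum_coeff,
      ← Fin.sum_univ_eq_sum_range (fun j => (F.coeff n).coeff j • x ^ j)]
    simp_rw [coeff_smul, coeff_map, coeff_coeff_swap, smul_eq_mul, Algebra.smul_def, mul_comm]
  rw [hsum]
  exact sum_mem fun j _ => Submodule.smul_mem _ _ (Submodule.subset_span ⟨j, rfl⟩)

lemma natDegree_coeff_swap_le {R : Type*} [CommSemiring R] (F : R[X][Y]) (j : ℕ) :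
    ((Bivariate.swap F).coeff j).natDegree ≤ F.natDegree := by
  refine natDegree_le_iff_coeff_eq_zero.mpr fun n hn => ?_
  rw [coeff_coeff_swap, coeff_eq_zero_of_natDegree_lt hn, coeff_zero]

lemma l1Seminorm_coeff_swap_le {R : Type*} [CommRing R] (v : RingSeminorm R) (F : R[X][Y])
    (j : ℕ) : l1Seminorm v ((Bivariate.swap F).coeff j) ≤ l1Seminorm (l1Seminorm v) F := by
  rw [l1Seminorm_eq_sum_range v (Nat.lt_succ_of_le (natDegree_coeff_swap_le F j)),
    l1Seminorm_eq_sum_range _ F.natDegree.lt_succ_self]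
  refine Finset.sum_le_sum fun n _ => ?_
  rw [coeff_coeff_swap]
  exact seminorm_coeff_le_l1Seminorm v _ _

lemma specialize_ne_zero {F : ℤ[X][Y]} (hF : F ≠ 0) {β : ℚ} (hβ : l1Norm₂ ℤ F < β.den) :
    specialize β F ≠ 0 := by
  obtain ⟨n, hn⟩ : ∃ n, F.coeff n ≠ 0 := by
    by_contra! hzero
    exact hF (ext hzero)
  intro h0
  have hroot : aeval β (F.coeff n) = 0 := by rw [← coeff_specialize, h0, coeff_zero]
  have hle := pow_den_le_l1Norm (m := 1) hn (by
    rwa [pow_one, dvd_iff_isRoot, IsRoot, eval_map, ← algebraMap_int_eq, ← aeval_def])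
  rw [pow_one] at hle
  exact (hle.trans (seminorm_coeff_le_l1Seminorm _ F n)).not_gt hβ

lemma eval_hasseDeriv_rootMultiplicity_ne_zero {R : Type*} [CommRing R] {p : R[X]} (hp : p ≠ 0)
    (x : R) : (hasseDeriv (p.rootMultiplicity x) p).eval x ≠ 0 := by
  rw [← taylor_coeff, rootMultiplicity_eq_natTrailingDegree, ← taylor_apply]
  exact trailingCoeff_nonzero_iff_nonzero.mpr ((taylor_injective x).ne_iff' (map_zero _) |>.mpr hp)

lemma exists_eval_hasseDeriv_specialize_ne_zero {F : ℤ[X][Y]} (hF : F ≠ 0) {s D : ℕ} (hD : 1 ≤ D)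
    (hX : ∀ n, (F.coeff n).natDegree ≤ s) (hY : F.natDegree ≤ D) {B : ℝ} (hB1 : 1 ≤ B)
    (hB : l1Norm₂ ℤ F ≤ B) {β : ℚ} (hβ : B < β.den) (γ : ℚ) :
    ∃ i, (γ.den : ℝ) ^ (i - s) ≤ (s + 1).factorial * (D ^ s * B) ^ (s + 1) ∧
      (hasseDeriv i (specialize β F)).eval γ ≠ 0 := by
  have hne := specialize_ne_zero hF (hB.trans_lt hβ)
  exact ⟨_, pow_den_rootMultiplicity_le hD (fun j => (natDegree_coeff_swap_le F j).trans hY)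
    (fun j => (l1Seminorm_coeff_swap_le _ F j).trans hB) hB1 (specialize_mem_span β hX) hne γ,
    eval_hasseDeriv_rootMultiplicity_ne_zero hne γ⟩

end Specialization

section LowerBound

lemma den_pow_mul_eval_mem_range {p : ℚ[X]} {c : ℚ}
    (hp : ∀ n, c * p.coeff n ∈ (Int.castRingHom ℚ).range) {D : ℕ} (hD : p.natDegree ≤ D) (γ : ℚ) :
    (γ.den : ℚ) ^ D * (c * p.eval γ) ∈ (Int.castRingHom ℚ).range := by
  rw [eval_eq_sum_range' (Nat.lt_succ_of_le hD), Finset.mul_sum, Finset.mul_sum]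
  refine sum_mem fun n hn => ?_
  have hnD : n ≤ D := Nat.lt_succ_iff.mp (Finset.mem_range.mp hn)
  have hγ : (γ.den : ℚ) ^ D * γ ^ n = γ.den ^ (D - n) * γ.num ^ n := by
    rw [← Rat.den_mul_eq_num, mul_pow, ← mul_assoc, ← pow_add, Nat.sub_add_cancel hnD]
  have hterm : (γ.den : ℚ) ^ D * (c * (p.coeff n * γ ^ n)) =
      c * p.coeff n * (γ.den ^ (D - n) * γ.num ^ n) := by
    rw [← hγ]
    ring
  rw [hterm]
  exact mul_mem (hp n) (mul_mem (pow_mem (natCast_mem _ _) _) (pow_mem (intCast_mem _ _) _))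

lemma one_le_den_pow_mul_abs_eval_specialize {F : ℤ[X][Y]} {s D : ℕ}
    (hX : ∀ n, (F.coeff n).natDegree ≤ s) (hY : F.natDegree ≤ D) {β γ : ℚ}
    (h : (specialize β F).eval γ ≠ 0) :
    (1 : ℝ) ≤ γ.den ^ D * β.den ^ s * |(((specialize β F).eval γ : ℚ) : ℝ)| := by
  have hcoeff : ∀ n, (β.den : ℚ) ^ s * (specialize β F).coeff n ∈ (Int.castRingHom ℚ).range := by
    intro n
    rw [coeff_specialize, aeval_def, ← eval_map]
    simpa using den_pow_mul_eval_mem_range (p := (F.coeff n).map (algebraMap ℤ ℚ)) (c := 1)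
      (by simp) (natDegree_map_le.trans (hX n)) β
  obtain ⟨z, hz⟩ := den_pow_mul_eval_mem_range hcoeff ((natDegree_specialize_le β F).trans hY) γ
  rw [← mul_assoc, eq_intCast] at hz
  have hz0 : z ≠ 0 := by
    rintro rfl
    simp [h] at hz
  have hzR : (z : ℝ) = γ.den ^ D * β.den ^ s * ((specialize β F).eval γ : ℚ) := mod_cast hz
  calc (1 : ℝ) ≤ |(z : ℝ)| := mod_cast Int.one_le_abs hz0
    _ = _ := by rw [hzR, abs_mul, abs_of_nonneg (by positivity)]

end LowerBound

section Vanishing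

variable {R : Type*} [CommSemiring R]

/-- The Taylor expansion `F(X + x, Y + y)` of a bivariate polynomial at the point `(x, y)`. -/
noncomputable def taylor₂ (x y : R) : R[X][Y] →+* R[X][Y] :=
  (taylorAlgHom (C y) : R[X][Y] →+* R[X][Y]).comp (mapRingHom (taylorAlgHom x))

lemma taylor₂_apply (x y : R) (F : R[X][Y]) :
    taylor₂ x y F = taylor (C y) (F.map (taylorAlgHom x : R[X] →+* R[X])) :=
  rfl

lemma evalEval_taylor₂ (x y u w : R) (F : R[X][Y]) :
    (taylor₂ x y F).evalEval u w = F.evalEval (u + x) (w + y) := by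
  have htaylor : (evalRingHom u).comp (taylorAlgHom x : R[X] →+* R[X]) = evalRingHom (u + x) :=
    RingHom.ext fun p => taylor_eval x p u
  rw [taylor₂_apply, evalEval, taylor_eval, ← C_add, ← evalEval, ← map_evalRingHom_eval, map_map,
    htaylor, map_evalRingHom_eval]

/-- `F` vanishes at `(x, y)` to weighted order at least `m`, where `X` has weight `N` and `Y` has
weight `1`. -/
def VanishesToOrder (N m : ℕ) (x y : R) (F : R[X][Y]) : Prop :=
  ∀ a b, N * b + a < m → ((taylor₂ x y F).coeff a).coeff b = 0

lemma coeff_taylor_hasseDeriv (r : R) (p : R[X]) (i n : ℕ) :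
    (taylor r (hasseDeriv i p)).coeff n = (n + i).choose n • (taylor r p).coeff (n + i) := by
  rw [taylor_coeff, taylor_coeff, ← LinearMap.comp_apply, hasseDeriv_comp, LinearMap.smul_apply,
    eval_smul]

lemma VanishesToOrder.hasseDeriv {N m : ℕ} {x y : R} {F : R[X][Y]}
    (h : VanishesToOrder N m x y F) (i : ℕ) :
    VanishesToOrder N (m - i) x y (Polynomial.hasseDeriv i F) := by
  intro a b hab
  rw [taylor₂_apply, ← hasseDeriv_map, coeff_taylor_hasseDeriv, ← taylor₂_apply, coeff_smul,
    h (a + i) b (by omega), smul_zero]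

end Vanishing

section UpperBound

lemma norm_evalEval_le_of_coeff_eq_zero {R : Type*} [SeminormedCommRing R] [NormOneClass R]
    {E : R[X][Y]} {N m : ℕ} (hE : ∀ a b, N * b + a < m → (E.coeff a).coeff b = 0) {u w : R} {θ : ℝ}
    (hu : ‖u‖ ≤ θ ^ N) (hw : ‖w‖ ≤ θ) (hθ : θ ≤ 1) :
    ‖E.evalEval u w‖ ≤ θ ^ m * l1Norm₂ R E := by
  have hθ0 : 0 ≤ θ := (norm_nonneg w).trans hw
  refine seminorm_map_le_mul_l1Seminorm (w := normRingSeminorm R)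
    (evalEvalRingHom u w).toAddMonoidHom fun a _ => ?_
  refine seminorm_map_le_mul_l1Seminorm (w := normRingSeminorm R)
    ((evalEvalRingHom u w).toAddMonoidHom.comp (monomial a).toAddMonoidHom) fun b _ => ?_
  set e := (E.coeff a).coeff b with he
  change ‖evalEval u w (monomial a (monomial b e))‖ ≤ θ ^ m * ‖e‖
  rcases lt_or_ge (N * b + a) m with hab | hab
  · simp [he, hE a b hab]
  · calc ‖evalEval u w (monomial a (monomial b e))‖ = ‖e * u ^ b * w ^ a‖ := by simp [evalEval]
      _ ≤ ‖e‖ * ‖u‖ ^ b * ‖w‖ ^ a := by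
        refine (norm_mul_le _ _).trans (mul_le_mul ((norm_mul_le _ _).trans ?_) (norm_pow_le _ _)
          (norm_nonneg _) (by positivity))
        gcongr
        exact norm_pow_le _ _
      _ ≤ ‖e‖ * (θ ^ N) ^ b * θ ^ a := by gcongr
      _ = θ ^ (N * b + a) * ‖e‖ := by ring
      _ ≤ θ ^ m * ‖e‖ := by
        gcongr ?_ * _
        exact pow_le_pow_of_le_one hθ0 hθ hab

lemma l1Norm₂_taylor₂_le {R : Type*} [SeminormedCommRing R] [NormOneClass R] {F : R[X][Y]}
    {s D : ℕ} (hX : ∀ n, (F.coeff n).natDegree ≤ s) (hY : F.natDegree ≤ D) (x y : R) :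
    l1Norm₂ R (taylor₂ x y F) ≤ (1 + ‖y‖) ^ D * (1 + ‖x‖) ^ s * l1Norm₂ R F := by
  have hone := l1Seminorm_one_le (normRingSeminorm_one_le R)
  have hy : l1Norm R (C y) = ‖y‖ := by rw [← monomial_zero_left, l1Seminorm_monomial]; rfl
  rw [mul_assoc, ← hy]
  refine (l1Seminorm_taylor_le hone (natDegree_map_le.trans hY) (C y)).trans ?_
  gcongr
  exact l1Seminorm_map_le _ fun n => l1Seminorm_taylor_le (normRingSeminorm_one_le R) (hX n) x

lemma VanishesToOrder.norm_evalEval_le {R : Type*} [SeminormedCommRing R] [NormOneClass R]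
    {F : R[X][Y]} {s D : ℕ} (hX : ∀ n, (F.coeff n).natDegree ≤ s) (hY : F.natDegree ≤ D)
    {N m : ℕ} {x y : R} (hF : VanishesToOrder N m x y F) {x' y' : R} {θ : ℝ} (hθ : θ ≤ 1)
    (hx : ‖x' - x‖ ≤ θ ^ N) (hy : ‖y' - y‖ ≤ θ) :
    ‖F.evalEval x' y'‖ ≤ θ ^ m * ((1 + ‖y‖) ^ D * (1 + ‖x‖) ^ s * l1Norm₂ R F) := by
  have hθ0 : 0 ≤ θ := (norm_nonneg _).trans hy
  have hle := norm_evalEval_le_of_coeff_eq_zero hF hx hy hθ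
  rw [evalEval_taylor₂, sub_add_cancel, sub_add_cancel] at hle
  exact hle.trans (by gcongr; exact l1Norm₂_taylor₂_le hX hY x y)

lemma VanishesToOrder.norm_evalEval_hasseDeriv_le {R : Type*} [SeminormedCommRing R]
    [NormOneClass R] {F : R[X][Y]} {s D : ℕ} (hX : ∀ n, (F.coeff n).natDegree ≤ s)
    (hY : F.natDegree ≤ D) {N m : ℕ} {x y : R} (hF : VanishesToOrder N m x y F) {x' y' : R}
    {θ : ℝ} (hθ : θ ≤ 1) (hx : ‖x' - x‖ ≤ θ ^ N) (hy : ‖y' - y‖ ≤ θ) (i : ℕ) :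
    ‖(Polynomial.hasseDeriv i F).evalEval x' y'‖ ≤
      θ ^ (m - i) * ((1 + ‖y‖) ^ D * (1 + ‖x‖) ^ s * (2 ^ D * l1Norm₂ R F)) := by
  have hX' : ∀ n, ((Polynomial.hasseDeriv i F).coeff n).natDegree ≤ s := fun n =>
    (natDegree_coeff_hasseDeriv_le F i n).trans (hX _)
  have hY' := (natDegree_hasseDeriv_le F i).trans ((Nat.sub_le _ _).trans hY)
  have hθ0 : 0 ≤ θ := (norm_nonneg _).trans hy
  refine ((hF.hasseDeriv i).norm_evalEval_le hX' hY' hθ hx hy).trans ?_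
  gcongr
  exact l1Seminorm_hasseDeriv_le hY i

/-- The image of an integral bivariate polynomial in `ℝ[X][Y]`. -/
noncomputable def realify : ℤ[X][Y] →+* ℝ[X][Y] :=
  mapRingHom (mapRingHom (Int.castRingHom ℝ))

lemma natDegree_realify_le (F : ℤ[X][Y]) : (realify F).natDegree ≤ F.natDegree :=
  natDegree_map_le

lemma natDegree_coeff_realify_le (F : ℤ[X][Y]) (n : ℕ) :
    ((realify F).coeff n).natDegree ≤ (F.coeff n).natDegree := by
  rw [realify, coe_mapRingHom, coeff_map]
  exact natDegree_map_le

lemma l1Norm₂_realify_le (F : ℤ[X][Y]) : l1Norm₂ ℝ (realify F) ≤ l1Norm₂ ℤ F := by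
  rw [← one_mul (l1Norm₂ ℤ F)]
  refine l1Seminorm_map_le _ fun n => l1Seminorm_map_le _ fun k => ?_
  rw [one_mul]
  exact (Int.norm_cast_real _).le

lemma cast_eval_specialize (F : ℤ[X][Y]) (β γ : ℚ) :
    (((specialize β F).eval γ : ℚ) : ℝ) = (realify F).evalEval (β : ℝ) (γ : ℝ) := by
  have hhom : (Rat.castHom ℝ).comp (aeval β : ℤ[X] →ₐ[ℤ] ℚ) =
      (evalRingHom (β : ℝ)).comp (mapRingHom (Int.castRingHom ℝ)) := by
    ext <;> simp
  calc (((specialize β F).eval γ : ℚ) : ℝ)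
      = ((specialize β F).map (Rat.castHom ℝ)).eval (γ : ℝ) :=
        (eval_map_apply (Rat.castHom ℝ) γ).symm
    _ = (F.map ((Rat.castHom ℝ).comp (aeval β : ℤ[X] →ₐ[ℤ] ℚ))).eval (γ : ℝ) := by
      rw [← map_map]; rfl
    _ = (realify F).evalEval (β : ℝ) (γ : ℝ) := by
      rw [hhom, ← map_evalRingHom_eval, ← map_map]; rfl

lemma hasseDeriv_realify (F : ℤ[X][Y]) (i : ℕ) :
    hasseDeriv i (realify F) = realify (hasseDeriv i F) :=
  hasseDeriv_map _ F i

lemma abs_eval_hasseDeriv_specialize_le {F : ℤ[X][Y]} {s D : ℕ}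
    (hX : ∀ n, (F.coeff n).natDegree ≤ s) (hY : F.natDegree ≤ D) {N m : ℕ} {α θ : ℝ}
    (hF : VanishesToOrder N m α α (realify F)) (hθ : θ ≤ 1) {β γ : ℚ}
    (hβ : |β - α| ≤ θ ^ N) (hγ : |γ - α| ≤ θ) (i : ℕ) :
    |(((hasseDeriv i (specialize β F)).eval γ : ℚ) : ℝ)| ≤
      θ ^ (m - i) * ((1 + |α|) ^ (D + s) * (2 ^ D * l1Norm₂ ℤ F)) := by
  have hθ0 : 0 ≤ θ := (abs_nonneg _).trans hγ
  rw [hasseDeriv_specialize, cast_eval_specialize, ← hasseDeriv_realify, pow_add,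
    ← Real.norm_eq_abs α]
  refine (hF.norm_evalEval_hasseDeriv_le (fun n => (natDegree_coeff_realify_le F n).trans (hX n))
    ((natDegree_realify_le F).trans hY) hθ hβ hγ i).trans ?_
  gcongr
  exact l1Norm₂_realify_le F

end UpperBound

section Siegel

lemma exists_monic_aeval_smul_eq_zero {R K L : Type*} [CommRing R] [IsDomain R]
    [IsIntegrallyClosed R] [Field K] [Algebra R K] [IsFractionRing R K] [Field L] [Algebra R L]
    [Algebra K L] [IsScalarTower R K L] {x : L} (hx : IsAlgebraic K x) :
    ∃ a : R, a ≠ 0 ∧ ∃ g : R[X], g.Monic ∧ g.natDegree ≤ (minpoly K x).natDegree ∧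
      aeval (a • x) g = 0 := by
  obtain ⟨a, ha, hint⟩ := ((IsFractionRing.isAlgebraic_iff R K L).mpr hx).exists_integral_multiple
  refine ⟨a, ha, minpoly R (a • x), minpoly.monic hint, ?_, minpoly.aeval R _⟩
  have hroot : aeval (a • x) ((minpoly K x).scaleRoots (algebraMap R K a)) = 0 := by
    rw [← algebraMap_smul K a x, Algebra.smul_def]
    exact scaleRoots_aeval_eq_zero (minpoly.aeval K x)
  have hne : (minpoly K x).scaleRoots (algebraMap R K a) ≠ 0 :=
    scaleRoots_ne_zero (minpoly.ne_zero hx.isIntegral) _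
  have hle := natDegree_le_of_dvd (minpoly.dvd K _ hroot) hne
  rwa [natDegree_scaleRoots, minpoly.isIntegrallyClosed_eq_field_fractions' K hint,
    (minpoly.monic hint).natDegree_map] at hle

lemma exists_int_vec_mulVec_eq_zero {ι κ : Type*} [Fintype ι] [Fintype κ] [Nonempty ι]
    {M : Matrix ι κ ℤ} {B : ℝ} (hB : 1 ≤ B) (hM : ∀ i j, ‖M i j‖ ≤ B) {N e : ℕ} (hN : 1 ≤ N)
    (hle : Fintype.card ι ≤ N * e) (hlt : Fintype.card ι + N ≤ Fintype.card κ) :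
    ∃ t : κ → ℤ, t ≠ 0 ∧ M.mulVec t = 0 ∧ ∀ j, ‖t j‖ ≤ (Fintype.card κ * B) ^ e := by
  let : SeminormedAddCommGroup (Matrix ι κ ℤ) := Matrix.seminormedAddCommGroup
  obtain ⟨t, ht0, htM, htn⟩ :=
    Int.Matrix.exists_ne_zero_int_vec_norm_le M (by omega) Fintype.card_pos
  refine ⟨t, ht0, htM, fun j => (norm_le_pi_norm t j).trans (htn.trans ?_)⟩
  have hMB : max 1 ‖M‖ ≤ B := max_le hB ((Matrix.norm_le_iff (by positivity)).mpr hM)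
  have hκ : (1 : ℝ) ≤ Fintype.card κ := mod_cast (by omega : 1 ≤ Fintype.card κ)
  have hle' : (Fintype.card ι : ℝ) ≤ N * e := mod_cast hle
  have hlt' : (Fintype.card ι : ℝ) + N ≤ Fintype.card κ := mod_cast hlt
  have hN' : (1 : ℝ) ≤ N := mod_cast hN
  have hexp : (Fintype.card ι : ℝ) / (Fintype.card κ - Fintype.card ι) ≤ e := by
    rw [div_le_iff₀ (by linarith), mul_comm]
    exact hle'.trans (by gcongr; linarith)
  calc _ ≤ ((Fintype.card κ : ℝ) * max 1 ‖M‖) ^ (e : ℝ) :=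
        Real.rpow_le_rpow_of_exponent_le
          (one_le_mul_of_one_le_of_one_le hκ (le_max_left _ _)) hexp
    _ ≤ (Fintype.card κ * B) ^ e := by rw [Real.rpow_natCast]; gcongr

-- Reducing the entries modulo `g` turns each equation over `ℤ[ω]` into `deg g` integral equations.
lemma exists_int_vec_sum_mul_aeval_eq_zero {A : Type*} [CommRing A] {ω : A} {g : ℤ[X]}
    (hg : g.Monic) (hg0 : 0 < g.natDegree) (hω : aeval ω g = 0) {ι κ : Type*} [Fintype ι]
    [Fintype κ] [Nonempty ι] {M : Matrix ι κ ℤ[X]} {B : ℝ} (hB : 1 ≤ B)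
    (hM : ∀ i j, l1Norm ℤ (M i j %ₘ g) ≤ B) {N e : ℕ} (hN : 1 ≤ N)
    (hle : Fintype.card ι * g.natDegree ≤ N * e)
    (hlt : Fintype.card ι * g.natDegree + N ≤ Fintype.card κ) :
    ∃ t : κ → ℤ, t ≠ 0 ∧ (∀ i, ∑ j, (t j : A) * aeval ω (M i j) = 0) ∧
      ∀ j, ‖t j‖ ≤ (Fintype.card κ * B) ^ e := by
  have : Nonempty (Fin g.natDegree) := ⟨⟨0, hg0⟩⟩
  have hcard : Fintype.card (ι × Fin g.natDegree) = Fintype.card ι * g.natDegree := by simp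
  obtain ⟨t, ht0, htM, htB⟩ := exists_int_vec_mulVec_eq_zero
    (M := Matrix.of fun (r : ι × Fin g.natDegree) j => (M r.1 j %ₘ g).coeff r.2) hB
    (fun r j => (seminorm_coeff_le_l1Seminorm (normRingSeminorm ℤ) _ _).trans (hM r.1 j)) hN
    (hcard ▸ hle) (hcard ▸ hlt)
  refine ⟨t, ht0, fun i => ?_, htB⟩
  have hmod : ∑ j, C (t j) * (M i j %ₘ g) = 0 := by
    ext n
    rw [finsetSum_coeff, coeff_zero]
    simp_rw [coeff_C_mul]
    rcases lt_or_ge n g.natDegree with hn | hn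
    · simpa [Matrix.mulVec, dotProduct, mul_comm] using congrFun htM (i, ⟨n, hn⟩)
    · refine Finset.sum_eq_zero fun j _ => ?_
      rw [coeff_eq_zero_of_degree_lt ((degree_modByMonic_lt _ hg).trans_le
        (degree_le_natDegree.trans (mod_cast hn))), mul_zero]
  have haeval := congrArg (aeval ω) hmod
  simpa [aeval_modByMonic_eq_self_of_root hω] using haeval

end Siegel

section OfCoeffs

variable {R : Type*} [CommSemiring R] {k l : ℕ}

/-- The bivariate polynomial `∑ t (j, n) X ^ j Y ^ n` with the given array of coefficients. -/
noncomputable def ofCoeffs (t : Fin k × Fin l → R) : R[X][Y] :=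
  ∑ c, monomial (c.2 : ℕ) (monomial (c.1 : ℕ) (t c))

lemma coeff_coeff_ofCoeffs (t : Fin k × Fin l → R) (j : Fin k) (n : Fin l) :
    ((ofCoeffs t).coeff n).coeff j = t (j, n) := by
  simp only [ofCoeffs, finsetSum_coeff]
  rw [Finset.sum_eq_single (j, n)]
  · simp
  · rintro ⟨j', n'⟩ - hne
    rw [coeff_monomial]
    split_ifs with hn
    · rw [coeff_monomial_of_ne]
      rintro hj
      exact hne (Prod.ext (Fin.ext hj.symm) (Fin.ext hn))
    · exact coeff_zero _
  · simp

lemma ofCoeffs_ne_zero {t : Fin k × Fin l → R} (ht : t ≠ 0) : ofCoeffs t ≠ 0 := by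
  contrapose! ht
  ext ⟨j, n⟩
  rw [← coeff_coeff_ofCoeffs t j n, ht]
  simp

lemma natDegree_ofCoeffs_le (t : Fin k × Fin (l + 1) → R) : (ofCoeffs t).natDegree ≤ l :=
  natDegree_sum_le_of_forall_le _ _ fun c _ => (natDegree_monomial_le _).trans (Fin.is_le c.2)

lemma natDegree_coeff_ofCoeffs_le (t : Fin (k + 1) × Fin l → R) (n : ℕ) :
    ((ofCoeffs t).coeff n).natDegree ≤ k := by
  rw [ofCoeffs, finsetSum_coeff]
  refine natDegree_sum_le_of_forall_le _ _ fun c _ => ?_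
  rw [coeff_monomial]
  split_ifs
  · exact (natDegree_monomial_le _).trans (Fin.is_le c.1)
  · simp

lemma l1Seminorm_ofCoeffs_le {S : Type*} [CommRing S] (v : RingSeminorm S)
    (t : Fin k × Fin l → S) :
    l1Seminorm (l1Seminorm v) (ofCoeffs t) ≤ ∑ c, v (t c) :=
  (seminorm_sum_le _ _ _).trans_eq (by simp)

lemma coeff_coeff_taylor₂_ofCoeffs (x y : R) (t : Fin k × Fin l → R) (a b : ℕ) :
    ((taylor₂ x y (ofCoeffs t)).coeff a).coeff b =
      ∑ c : Fin k × Fin l, t c * (((c.2 : ℕ).choose a * (c.1 : ℕ).choose b : ℕ) *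
        (y ^ ((c.2 : ℕ) - a) * x ^ ((c.1 : ℕ) - b))) := by
  rw [ofCoeffs, map_sum, finsetSum_coeff, finsetSum_coeff]
  refine Finset.sum_congr rfl fun c _ => ?_
  rw [taylor₂_apply, map_monomial, RingHom.coe_coe, taylorAlgHom_apply, taylor_monomial,
    taylor_monomial, coeff_C_mul, coeff_X_add_C_pow, mul_assoc, coeff_C_mul, ← C_pow,
    ← C_eq_natCast, ← C_mul, coeff_mul_C, coeff_X_add_C_pow]
  push_cast
  ring

lemma realify_ofCoeffs (t : Fin k × Fin l → ℤ) :
    realify (ofCoeffs t) = ofCoeffs fun c => (t c : ℝ) := by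
  simp [realify, ofCoeffs]

end OfCoeffs

section AuxiliaryPolynomial

lemma sum_fin_sub_eq_choose (T : ℕ) : ∑ b : Fin T, (T - b) = (T + 1).choose 2 := by
  rw [Fin.sum_univ_eq_sum_range (fun b => T - b), Nat.choose_two_right, ← Finset.sum_range_id,
    Finset.sum_range_succ', ← Finset.sum_range_reflect]
  refine Finset.sum_congr rfl fun b hb => ?_
  have := Finset.mem_range.mp hb
  omega

lemma card_sigma_fin_mul_sub (N T : ℕ) :
    Fintype.card (Σ b : Fin T, Fin (N * (T - b))) = N * (T + 1).choose 2 := by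
  rw [Fintype.card_sigma, ← sum_fin_sub_eq_choose, Finset.mul_sum]
  simp

lemma one_le_norm_of_ne_zero {a : ℤ} (ha : a ≠ 0) : 1 ≤ ‖a‖ := by
  rw [Int.norm_eq_abs]
  exact mod_cast Int.one_le_abs ha

/-- The matrix of the linear equations on the coefficients `t (j, n)` expressing that
`ofCoeffs t` vanishes at `(α, α)` to weighted order `N * T`. Its entries are polynomials to be
evaluated at `A * α`; the factor `A ^ (s + s * N)`, common to all equations, makes them integral. -/
noncomputable def vanishingMatrix (A : ℤ) (s N T : ℕ) :
    Matrix (Σ b : Fin T, Fin (N * (T - b))) (Fin (s + 1) × Fin (s * N + 1)) ℤ[X] :=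
  Matrix.of fun r c =>
    let m := ((c.2 : ℕ) - r.2) + ((c.1 : ℕ) - r.1)
    monomial m (((c.2 : ℕ).choose r.2 * (c.1 : ℕ).choose r.1 : ℕ) * A ^ (s + s * N - m))

lemma aeval_vanishingMatrix (A : ℤ) (α : ℝ) {s N T : ℕ} (r : Σ b : Fin T, Fin (N * (T - b)))
    (c : Fin (s + 1) × Fin (s * N + 1)) :
    aeval (A • α) (vanishingMatrix A s N T r c) = A ^ (s + s * N) *
      (((c.2 : ℕ).choose r.2 * (c.1 : ℕ).choose r.1 : ℕ) *
        (α ^ ((c.2 : ℕ) - r.2) * α ^ ((c.1 : ℕ) - r.1))) := by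
  have hm : ((c.2 : ℕ) - r.2) + ((c.1 : ℕ) - r.1) ≤ s + s * N := by omega
  rw [← pow_add, ← Nat.sub_add_cancel hm]
  simp only [zsmul_eq_mul, vanishingMatrix, Nat.cast_mul, Matrix.of_apply, aeval_monomial,
    algebraMap_int_eq, eq_intCast, Int.cast_mul, Int.cast_natCast, Int.cast_pow, pow_add, mul_pow]
  ring

lemma l1Norm_vanishingMatrix_modByMonic_le {A : ℤ} (hA : A ≠ 0) {g : ℤ[X]} (hg : g.Monic)
    {s N T : ℕ} (r : Σ b : Fin T, Fin (N * (T - b))) (c : Fin (s + 1) × Fin (s * N + 1)) :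
    l1Norm ℤ (vanishingMatrix A s N T r c %ₘ g) ≤
      (2 * ‖A‖ * (1 + l1Norm ℤ g)) ^ (s + s * N) := by
  set m := ((c.2 : ℕ) - r.2) + ((c.1 : ℕ) - r.1)
  set e : ℤ := ((c.2 : ℕ).choose r.2 * (c.1 : ℕ).choose r.1 : ℕ) * A ^ (s + s * N - m) with he
  have hmR : m ≤ s + s * N := by omega
  have hchoose : (c.2 : ℕ).choose r.2 * (c.1 : ℕ).choose r.1 ≤ 2 ^ (s + s * N) := by
    rw [pow_add, mul_comm]
    exact Nat.mul_le_mul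
      ((Nat.choose_le_two_pow _ _).trans (Nat.pow_le_pow_right two_pos (Fin.is_le c.1)))
      ((Nat.choose_le_two_pow _ _).trans (Nat.pow_le_pow_right two_pos (Fin.is_le c.2)))
  have hA1 := one_le_norm_of_ne_zero hA
  have heB : ‖e‖ ≤ 2 ^ (s + s * N) * ‖A‖ ^ (s + s * N) := by
    rw [he, norm_mul, norm_pow, Int.norm_natCast]
    gcongr
    · exact mod_cast hchoose
    · exact Nat.sub_le _ _
  have hmod : vanishingMatrix A s N T r c %ₘ g = C e * (X ^ m %ₘ g) := by
    rw [← smul_eq_C_mul, ← smul_modByMonic, smul_eq_C_mul, C_mul_X_pow_eq_monomial]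
    rfl
  calc l1Norm ℤ (vanishingMatrix A s N T r c %ₘ g) ≤ ‖e‖ * l1Norm ℤ (X ^ m %ₘ g) := by
        rw [hmod]
        refine (map_mul_le_mul _ _ _).trans_eq ?_
        rw [← monomial_zero_left, l1Seminorm_monomial]
        rfl
    _ ≤ 2 ^ (s + s * N) * ‖A‖ ^ (s + s * N) * (1 + l1Norm ℤ g) ^ (s + s * N) := by
        gcongr
        refine (l1Seminorm_X_pow_modByMonic_le (normRingSeminorm_one_le ℤ) hg m).trans ?_
        exact pow_le_pow_right₀ (by linarith [apply_nonneg (l1Norm ℤ) g]) hmR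
    _ = _ := by rw [mul_pow, mul_pow]

lemma vanishesToOrder_realify_ofCoeffs {A : ℤ} (hA : A ≠ 0) {α : ℝ} {s N T : ℕ}
    {t : Fin (s + 1) × Fin (s * N + 1) → ℤ}
    (ht : ∀ r, ∑ c, (t c : ℝ) * aeval (A • α) (vanishingMatrix A s N T r c) = 0) :
    VanishesToOrder N (N * T) α α (realify (ofCoeffs t)) := by
  intro a b hab
  have hbT : b < T := lt_of_mul_lt_mul_left ((Nat.le_add_right _ a).trans_lt hab) N.zero_le
  have haN : a < N * (T - b) := by rw [Nat.mul_sub]; omega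
  have hA' : (A : ℝ) ^ (s + s * N) ≠ 0 := pow_ne_zero _ (mod_cast hA)
  rw [realify_ofCoeffs, coeff_coeff_taylor₂_ofCoeffs]
  refine (mul_eq_zero_iff_left hA').mp ?_
  rw [Finset.mul_sum, ← ht ⟨⟨b, hbT⟩, ⟨a, haN⟩⟩]
  refine Finset.sum_congr rfl fun c _ => ?_
  rw [aeval_vanishingMatrix]
  ring

lemma card_mul_pow_le {L : ℝ} (hL : 1 ≤ L) (s : ℕ) {N : ℕ} (hN : 1 ≤ N) :
    ((s + 1) * (s * N + 1) : ℝ) * L ^ (s + s * N) ≤ (2 * (s + 1) ^ 2 * L ^ (2 * s)) ^ N := by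
  have hN' : (1 : ℝ) ≤ N := mod_cast hN
  have hN2 : (N : ℝ) ≤ 2 ^ N := mod_cast Nat.lt_two_pow_self.le
  have hs : ((s + 1 : ℝ) ^ 2) ≤ ((s + 1 : ℝ) ^ 2) ^ N :=
    le_self_pow₀ (one_le_pow₀ (by simp)) (by omega)
  calc ((s + 1) * (s * N + 1) : ℝ) * L ^ (s + s * N)
      ≤ N * (s + 1) ^ 2 * L ^ (2 * s * N) := by
        gcongr ?_ * ?_
        · nlinarith
        · exact pow_le_pow_right₀ hL (by nlinarith)
    _ ≤ 2 ^ N * ((s + 1) ^ 2) ^ N * L ^ (2 * s * N) := by gcongr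
    _ = _ := by rw [mul_pow, mul_pow, pow_mul L]

lemma exists_vanishesToOrder_of_monic {A : ℤ} (hA : A ≠ 0) {α : ℝ} {g : ℤ[X]} (hg : g.Monic)
    (hg0 : 0 < g.natDegree) (hα : aeval (A • α) g = 0) {s T : ℕ} (hT : 1 ≤ T)
    (hsT : g.natDegree * (T + 1).choose 2 < s * (s + 1)) :
    ∃ K : ℝ, 1 ≤ K ∧ ∀ N ≥ 1, ∃ F : ℤ[X][Y], F ≠ 0 ∧ (∀ n, (F.coeff n).natDegree ≤ s) ∧
      F.natDegree ≤ s * N ∧ l1Norm₂ ℤ F ≤ K ^ N ∧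
      VanishesToOrder N (N * T) α α (realify F) := by
  set L := 2 * ‖A‖ * (1 + l1Norm ℤ g)
  have hL : 1 ≤ L := by
    nlinarith [apply_nonneg (l1Norm ℤ) g, one_le_norm_of_ne_zero hA]
  set e := g.natDegree * (T + 1).choose 2
  refine ⟨(2 * (s + 1) ^ 2 * L ^ (2 * s)) ^ (e + 1), one_le_pow₀ ?_, fun N hN => ?_⟩
  · nlinarith [one_le_pow₀ hL (n := 2 * s), s.cast_nonneg (α := ℝ)]
  have hcard : Fintype.card (Fin (s + 1) × Fin (s * N + 1)) = (s + 1) * (s * N + 1) := by simp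
  have hrows : Fintype.card (Σ b : Fin T, Fin (N * (T - b))) * g.natDegree = N * e := by
    rw [card_sigma_fin_mul_sub]
    ring
  have : Nonempty (Σ b : Fin T, Fin (N * (T - b))) := ⟨⟨⟨0, hT⟩, ⟨0, Nat.mul_pos hN hT⟩⟩⟩
  obtain ⟨t, ht0, htM, htB⟩ := exists_int_vec_sum_mul_aeval_eq_zero hg hg0 hα (one_le_pow₀ hL)
    (l1Norm_vanishingMatrix_modByMonic_le hA hg) hN hrows.le (by rw [hrows, hcard]; nlinarith)
  refine ⟨ofCoeffs t, ofCoeffs_ne_zero ht0, natDegree_coeff_ofCoeffs_le t, natDegree_ofCoeffs_le t,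
    ?_, vanishesToOrder_realify_ofCoeffs hA htM⟩
  rw [hcard] at htB
  push_cast at htB
  calc l1Norm₂ ℤ (ofCoeffs t) ≤ ∑ c, ‖t c‖ := l1Seminorm_ofCoeffs_le _ t
    _ ≤ ∑ _c : Fin (s + 1) × Fin (s * N + 1),
        ((s + 1) * (s * N + 1) * L ^ (s + s * N) : ℝ) ^ e := Finset.sum_le_sum fun c _ => htB c
    _ = (s + 1) * (s * N + 1) * ((s + 1) * (s * N + 1) * L ^ (s + s * N) : ℝ) ^ e := by simp
    _ ≤ ((s + 1) * (s * N + 1) * L ^ (s + s * N)) ^ (e + 1) := by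
      rw [pow_succ']
      gcongr ?_ * _
      exact le_mul_of_one_le_right (by positivity) (one_le_pow₀ hL)
    _ ≤ ((2 * (s + 1) ^ 2 * L ^ (2 * s)) ^ N) ^ (e + 1) := by gcongr; exact card_mul_pow_le hL s hN
    _ = _ := pow_right_comm _ _ _

lemma exists_vanishesToOrder {α : ℝ} (hα : IsAlgebraic ℚ α) {s T : ℕ} (hT : 1 ≤ T)
    (hsT : (minpoly ℚ α).natDegree * (T + 1).choose 2 < s * (s + 1)) :
    ∃ K : ℝ, 1 ≤ K ∧ ∀ N ≥ 1, ∃ F : ℤ[X][Y], F ≠ 0 ∧ (∀ n, (F.coeff n).natDegree ≤ s) ∧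
      F.natDegree ≤ s * N ∧ l1Norm₂ ℤ F ≤ K ^ N ∧
      VanishesToOrder N (N * T) α α (realify F) := by
  obtain ⟨A, hA, g, hg, hdeg, hroot⟩ := exists_monic_aeval_smul_eq_zero (R := ℤ) hα
  have hg0 := natDegree_pos_of_aeval_root hg.ne_zero hroot fun x hx => by simpa using hx
  exact exists_vanishesToOrder_of_monic hA hg hg0 hroot hT
    ((Nat.mul_le_mul_right _ hdeg).trans_lt hsT)

end AuxiliaryPolynomial

section FundamentalInequality

lemma factorial_mul_pow_le {K : ℝ} (hK : 0 ≤ K) (s : ℕ) {N : ℕ} (hN : 1 ≤ N) :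
    ((s + 1).factorial : ℝ) * (((s * N : ℕ) : ℝ) ^ s * K ^ N) ^ (s + 1) ≤
      ((s + 1).factorial * ((2 * s) ^ s * K) ^ (s + 1)) ^ N := by
  have hfact : ((s + 1).factorial : ℝ) ≤ (s + 1).factorial ^ N :=
    le_self_pow₀ (mod_cast (s + 1).factorial_pos) (by omega)
  have hsN : ((s * N : ℕ) : ℝ) ≤ (2 * s) ^ N := by
    rw [mul_pow, mul_comm s]
    exact mod_cast Nat.mul_le_mul Nat.lt_two_pow_self.le (Nat.le_self_pow (by omega) s)
  calc _ ≤ ((s + 1).factorial : ℝ) ^ N * (((2 * s) ^ N) ^ s * K ^ N) ^ (s + 1) := by gcongr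
    _ = _ := by rw [pow_right_comm (2 * (s : ℝ)), ← mul_pow, pow_right_comm, ← mul_pow]

lemma pow_add_mul_le {a K : ℝ} (ha : 1 ≤ a) (hK : 0 ≤ K) (s : ℕ) {N : ℕ} (hN : 1 ≤ N) :
    a ^ (s * N + s) * (2 ^ (s * N) * K ^ N) ≤ (a ^ (2 * s) * 2 ^ s * K) ^ N := by
  calc _ ≤ a ^ (2 * s * N) * (2 ^ (s * N) * K ^ N) := by
        gcongr
        nlinarith
    _ = _ := by rw [mul_pow, mul_pow, pow_mul, pow_mul 2]; ring

lemma exists_one_le_mul_pow_of_abs_sub_le {α : ℝ} (hα : IsAlgebraic ℚ α) {s T : ℕ} (hT : 1 ≤ T)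
    (hsT : (minpoly ℚ α).natDegree * (T + 1).choose 2 < s * (s + 1)) :
    ∃ C ≥ (0 : ℝ), ∀ N ≥ 1, ∀ (β γ : ℚ) (θ : ℝ), θ ≤ 1 → |β - α| ≤ θ ^ N → |γ - α| ≤ θ →
      C ^ N < β.den → ∃ i, (γ.den : ℝ) ^ (i - s) ≤ C ^ N ∧
        1 ≤ (γ.den : ℝ) ^ (s * N) * β.den ^ s * (θ ^ (N * T - i) * C ^ N) := by
  obtain ⟨K, hK, hF⟩ := exists_vanishesToOrder hα hT hsT
  have hs : 1 ≤ s := Nat.pos_of_mul_pos_right (Nat.zero_lt_of_lt hsT)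
  have hα1 : 1 ≤ 1 + |α| := by simp
  set C₁ := (s + 1).factorial * ((2 * s) ^ s * K) ^ (s + 1)
  set C₂ := (1 + |α|) ^ (2 * s) * 2 ^ s * K
  have hKC : K ≤ C₂ := le_mul_of_one_le_left (by positivity)
    (one_le_mul_of_one_le_of_one_le (one_le_pow₀ hα1) (one_le_pow₀ one_le_two))
  refine ⟨max C₁ C₂, le_max_of_le_left (by positivity), fun N hN β γ θ hθ hβ hγ hden => ?_⟩
  obtain ⟨F, hF0, hX, hY, hFK, hvan⟩ := hF N hN
  have hC₁ : C₁ ^ N ≤ max C₁ C₂ ^ N := by gcongr; exact le_max_left _ _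
  have hC₂ : C₂ ^ N ≤ max C₁ C₂ ^ N := by gcongr; exact le_max_right _ _
  have hKN : K ^ N ≤ C₂ ^ N := by gcongr
  obtain ⟨i, hi, hne⟩ := exists_eval_hasseDeriv_specialize_ne_zero hF0 (Nat.mul_pos hs hN) hX hY
    (one_le_pow₀ hK) hFK ((hKN.trans hC₂).trans_lt hden) γ
  have hθ0 : 0 ≤ θ := (abs_nonneg _).trans hγ
  refine ⟨i, hi.trans ((factorial_mul_pow_le (by positivity) s hN).trans hC₁), ?_⟩
  have hupper := abs_eval_hasseDeriv_specialize_le hX hY hvan hθ hβ hγ i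
  have hbound : (1 + |α|) ^ (s * N + s) * (2 ^ (s * N) * l1Norm₂ ℤ F) ≤ max C₁ C₂ ^ N :=
    ((by gcongr : _ ≤ _).trans (pow_add_mul_le hα1 (by positivity) s hN)).trans hC₂
  rw [hasseDeriv_specialize] at hne hupper
  refine (one_le_den_pow_mul_abs_eval_specialize
    (fun n => (natDegree_coeff_hasseDeriv_le F i n).trans (hX _))
    ((natDegree_hasseDeriv_le F i).trans ((Nat.sub_le _ _).trans hY)) hne).trans ?_
  gcongr
  exact hupper.trans (by gcongr)

end FundamentalInequality

section Exponents

open Filter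

lemma mul_exponent_le_of_one_le {q q₂ C ε ρ : ℝ} (hq : 1 < q) (hρ : 0 ≤ ρ) (hC0 : 0 ≤ C)
    (hC : C ≤ q ^ ε) {i s N T : ℕ} (hi : q ^ (i - s) ≤ C ^ N) (hq₂0 : 0 ≤ q₂)
    (hq₂ : q₂ ≤ q ^ (N + 1))
    (h : 1 ≤ q ^ (s * N) * q₂ ^ s * ((q ^ (-ρ)) ^ (N * T - i) * C ^ N)) :
    N * (ρ * T - 2 * s - ε * (1 + ρ)) ≤ s * (1 + ρ) := by
  have hq0 : 0 < q := one_pos.trans hq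
  have hCN : C ^ N ≤ q ^ (ε * N) := by
    rw [Real.rpow_mul hq0.le, Real.rpow_natCast]
    gcongr
  have hi' : ((i - s : ℕ) : ℝ) ≤ ε * N := by
    rw [← Real.rpow_le_rpow_left_iff hq, Real.rpow_natCast]
    exact hi.trans hCN
  have hexp : 0 ≤ s * N + (N + 1) * s + (-ρ * (N * T - i : ℕ) + ε * N) := by
    rw [← Real.rpow_le_rpow_left_iff hq, Real.rpow_zero]
    calc 1 ≤ q ^ (s * N) * (q ^ (N + 1)) ^ s * ((q ^ (-ρ)) ^ (N * T - i) * q ^ (ε * N)) :=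
          h.trans (by gcongr)
      _ = _ := by
        rw [← pow_mul, ← Real.rpow_mul_natCast hq0.le, ← Real.rpow_natCast, ← Real.rpow_natCast,
          ← Real.rpow_add hq0, ← Real.rpow_add hq0, ← Real.rpow_add hq0]
        push_cast
        rfl
  have hsub : (i : ℝ) - s ≤ (i - s : ℕ) := by
    rw [sub_le_iff_le_add]
    exact mod_cast le_tsub_add
  have hsub' : (N : ℝ) * T - i ≤ (N * T - i : ℕ) := by
    rw [sub_le_iff_le_add]
    exact mod_cast le_tsub_add
  nlinarith [mul_le_mul_of_nonneg_left hsub' hρ, mul_le_mul_of_nonneg_left (hsub.trans hi') hρ]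

variable {α ρ : ℝ} {s T : ℕ}

lemma eventually_mul_exponent_le (hα : IsAlgebraic ℚ α) (hT : 1 ≤ T)
    (hsT : (minpoly ℚ α).natDegree * (T + 1).choose 2 < s * (s + 1)) (hρ : 0 ≤ ρ) {ε : ℝ}
    (hε0 : 0 < ε) (hε1 : ε < 1) :
    ∀ᶠ q : ℕ in atTop, ∀ β γ : ℚ, |β - α| ≤ (β.den : ℝ) ^ (-ρ) → |γ - α| ≤ (γ.den : ℝ) ^ (-ρ) →
      γ.den = q → ∀ N : ℕ, 1 ≤ N → q ^ N ≤ β.den → β.den ≤ q ^ (N + 1) →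
      N * (ρ * T - 2 * s - ε * (1 + ρ)) ≤ s * (1 + ρ) := by
  obtain ⟨C, hC0, hC⟩ := exists_one_le_mul_pow_of_abs_sub_le hα hT hsT
  have hlarge : ∀ᶠ q : ℕ in atTop, C ≤ (q : ℝ) ^ ε :=
    ((tendsto_rpow_atTop hε0).comp tendsto_natCast_atTop_atTop).eventually_ge_atTop C
  filter_upwards [hlarge, eventually_gt_atTop 1] with q hCq hq β γ hβ hγ hγq N hN hβl hβu
  subst hγq
  have hq1 : (1 : ℝ) < γ.den := mod_cast hq
  have hβN : |β - α| ≤ ((γ.den : ℝ) ^ (-ρ)) ^ N := by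
    rw [Real.rpow_pow_comm (by positivity)]
    exact hβ.trans (Real.rpow_le_rpow_of_nonpos (by positivity) (mod_cast hβl) (by linarith))
  have hCβ : C ^ N < β.den := by
    have hCq1 : C < γ.den := hCq.trans_lt (by simpa using Real.rpow_lt_rpow_of_exponent_lt hq1 hε1)
    exact (pow_lt_pow_left₀ hCq1 hC0 (by omega)).trans_le (mod_cast hβl)
  obtain ⟨i, hi, hle⟩ := hC N hN β γ _
    (Real.rpow_le_one_of_one_le_of_nonpos hq1.le (by linarith)) hβN hγ hCβ
  exact mul_exponent_le_of_one_le hq1 hρ hC0 hCq hi (by positivity) (mod_cast hβu) hle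

lemma exists_den_lt_of_mul_lt_mul (hα : IsAlgebraic ℚ α) (hT : 1 ≤ T)
    (hsT : (minpoly ℚ α).natDegree * (T + 1).choose 2 < s * (s + 1)) (hρ : 0 ≤ ρ)
    (hsρ : 2 * s < ρ * T) :
    ∃ Q : ℕ, ∀ β : ℚ, |β - α| ≤ (β.den : ℝ) ^ (-ρ) → β.den < Q := by
  obtain ⟨ε, hε0, hε⟩ := exists_between
    (lt_min one_pos (div_pos (sub_pos.mpr hsρ) (by positivity : 0 < 1 + ρ)))
  rw [lt_min_iff, lt_div_iff₀ (by positivity)] at hε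
  obtain ⟨Q, hQ⟩ := ((eventually_mul_exponent_le hα hT hsT hρ hε0 hε.1).and
    (eventually_gt_atTop 1)).exists_forall_of_atTop
  by_cases hγ : ∃ γ : ℚ, |γ - α| ≤ (γ.den : ℝ) ^ (-ρ) ∧ Q ≤ γ.den
  · obtain ⟨γ, hγ, hQγ⟩ := hγ
    obtain ⟨hmul, hγ1⟩ := hQ _ hQγ
    obtain ⟨N₀, hN₀⟩ := exists_nat_gt (s * (1 + ρ) / (ρ * T - 2 * s - ε * (1 + ρ)))
    rw [div_lt_iff₀ (sub_pos.mpr hε.2)] at hN₀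
    refine ⟨γ.den ^ (N₀ + 1), fun β hβ => ?_⟩
    by_contra! hlarge
    have hlog : N₀ + 1 ≤ Nat.log γ.den β.den := Nat.le_log_of_pow_le hγ1 hlarge
    have hle := hmul β γ hβ hγ rfl (Nat.log γ.den β.den) (by omega)
      (Nat.pow_log_le_self _ β.den_nz) (Nat.lt_pow_succ_log_self hγ1 _).le
    have hmono : (N₀ : ℝ) * (ρ * T - 2 * s - ε * (1 + ρ)) ≤
        Nat.log γ.den β.den * (ρ * T - 2 * s - ε * (1 + ρ)) := by
      gcongr
      · exact (sub_pos.mpr hε.2).le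
      · exact (Nat.le_succ N₀).trans hlog
    linarith
  · push Not at hγ
    exact ⟨Q, hγ⟩

lemma exists_choose_lt_mul {d : ℕ} (hρ : √(2 * d) < ρ) :
    ∃ s T : ℕ, 1 ≤ T ∧ d * (T + 1).choose 2 < s * (s + 1) ∧ 2 * s < ρ * T := by
  obtain ⟨r, hr, hrρ⟩ := exists_rat_btwn (div_lt_div_of_pos_right hρ two_pos)
  have hr0 : 0 < r := mod_cast (by positivity : 0 ≤ √(2 * d) / 2).trans_lt hr
  obtain ⟨a, ha⟩ := Int.eq_ofNat_of_zero_le (Rat.num_pos.mpr hr0).le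
  have hb : (0 : ℝ) < r.den := mod_cast r.pos
  have hab : (a : ℝ) = r * r.den := by
    have h : (a : ℚ) = r * r.den := by rw [Rat.mul_den_eq_num, ha]; rfl
    exact mod_cast h
  have hsq : d * r.den ^ 2 + 1 ≤ 2 * a ^ 2 := by
    have hlt : (d : ℝ) * r.den ^ 2 < 2 * a ^ 2 := by
      rw [div_lt_iff₀ two_pos, Real.sqrt_lt' (by positivity)] at hr
      rw [hab, mul_pow, ← mul_assoc]
      gcongr
      linarith
    exact mod_cast hlt
  have hk : (1 : ℝ) ≤ d * r.den + 1 := le_add_of_nonneg_left (by positivity)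
  refine ⟨(d * r.den + 1) * a, (d * r.den + 1) * r.den, Nat.mul_pos (by omega) r.pos, ?_, ?_⟩
  · have hsqR : (d : ℝ) * r.den ^ 2 + 1 ≤ 2 * a ^ 2 := mod_cast hsq
    rw [← Nat.cast_lt (α := ℝ), Nat.cast_mul, Nat.cast_choose_two]
    push_cast
    nlinarith [mul_le_mul_of_nonneg_left hsqR (sq_nonneg ((d : ℝ) * r.den + 1)),
      (by positivity : 0 ≤ ((d : ℝ) * r.den + 1) * a)]
  · push_cast
    rw [hab]
    nlinarith [mul_pos hb (one_pos.trans_le hk)]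

end Exponents

section Finiteness

variable {α ρ : ℝ}

lemma finite_setOf_abs_sub_le_of_den_lt (x r : ℝ) (Q : ℕ) :
    {β : ℚ | |β - x| ≤ r ∧ β.den < Q}.Finite := by
  refine ((Set.finite_Icc (-⌊Q * (r + |x|)⌋) ⌊Q * (r + |x|)⌋).prod (Set.finite_Iio Q)).of_injOn
    (f := fun β : ℚ => (β.num, β.den)) ?_ fun β _ γ _ h => Rat.ext (congr_arg Prod.fst h)
      (congr_arg Prod.snd h)
  rintro β ⟨hβ, hden⟩
  refine ⟨abs_le.mp (Int.le_floor.mpr ?_), hden⟩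
  have hβx : |(β : ℝ)| ≤ r + |x| := by linarith [abs_sub_abs_le_abs_sub (β : ℝ) x]
  calc ((|β.num| : ℤ) : ℝ) = β.den * |(β : ℝ)| := by
        rw [Int.cast_abs, ← Nat.abs_cast β.den, ← abs_mul]
        exact congr_arg _ (mod_cast (Rat.den_mul_eq_num β).symm)
    _ ≤ Q * (r + |x|) := by gcongr

theorem finite_setOf_abs_sub_le_den_rpow (hα : IsAlgebraic ℚ α)
    (hρ : √(2 * (minpoly ℚ α).natDegree) < ρ) :
    {β : ℚ | |β - α| ≤ (β.den : ℝ) ^ (-ρ)}.Finite := by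
  have hρ0 : 0 ≤ ρ := (Real.sqrt_nonneg _).trans hρ.le
  obtain ⟨s, T, hT, hsT, hsρ⟩ := exists_choose_lt_mul hρ
  obtain ⟨Q, hQ⟩ := exists_den_lt_of_mul_lt_mul hα hT hsT hρ0 hsρ
  refine (finite_setOf_abs_sub_le_of_den_lt α 1 Q).subset fun β hβ => ⟨hβ.trans ?_, hQ β hβ⟩
  exact Real.rpow_le_one_of_one_le_of_nonpos (mod_cast β.pos) (by linarith)

lemma finite_setOf_abs_mul_sub_le_of_div_eq {x : ℝ} {β : ℚ} (hβ : (β : ℝ) ≠ x) (r : ℝ) :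
    {pq : ℤ × ℤ | (1 ≤ pq.2 ∧ |pq.2 * x - pq.1| ≤ r) ∧ (pq.1 / pq.2 : ℚ) = β}.Finite := by
  have hnum : ∀ {p q : ℤ}, 1 ≤ q → (p / q : ℚ) = β → (p : ℚ) = β * q := fun hq h =>
    (div_eq_iff (mod_cast (by omega))).mp h
  refine (Set.finite_Icc 1 ⌊r / |x - β|⌋).of_injOn (f := Prod.snd) ?_ ?_
  · rintro ⟨p, q⟩ ⟨⟨hq, hr⟩, hpq⟩
    refine ⟨hq, Int.le_floor.mpr ((le_div_iff₀ (abs_pos.mpr (sub_ne_zero.mpr hβ.symm))).mpr ?_)⟩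
    have hp : (p : ℝ) = β * q := mod_cast hnum hq hpq
    rwa [hp, mul_comm (β : ℝ), ← mul_sub, abs_mul, abs_of_pos (mod_cast hq)] at hr
  · rintro ⟨p, q⟩ ⟨⟨hq, -⟩, hpq⟩ ⟨p', q'⟩ ⟨⟨hq', -⟩, hpq'⟩ (rfl : q = q')
    have hp : (p : ℚ) = p' := (hnum hq hpq).trans (hnum hq' hpq').symm
    exact Prod.ext (mod_cast hp) rfl

lemma abs_div_sub_le_den_rpow {x : ℝ} (hρ : 0 ≤ ρ + 1) {p q : ℤ} (hq : 1 ≤ q)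
    (h : (q : ℝ) ^ ρ * |q * x - p| ≤ 1) :
    |((p / q : ℚ) : ℝ) - x| ≤ ((p / q : ℚ).den : ℝ) ^ (-(ρ + 1)) := by
  have hq0 : (0 : ℝ) < q := mod_cast hq
  have hden : ((p / q : ℚ).den : ℤ) ≤ q := by
    rw [← Rat.divInt_eq_div]
    exact Int.le_of_dvd hq (Rat.den_dvd p q)
  refine le_trans ?_ (Real.rpow_le_rpow_of_nonpos (mod_cast Rat.pos _)
    (mod_cast hden : ((p / q : ℚ).den : ℝ) ≤ q) (neg_nonpos.mpr hρ))
  rw [Real.rpow_neg hq0.le, ← one_div, le_div_iff₀' (by positivity), Real.rpow_add_one hq0.ne',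
    mul_assoc, abs_sub_comm]
  rwa [← abs_of_pos hq0, ← abs_mul, abs_of_pos hq0, mul_sub, Rat.cast_div, Rat.cast_intCast,
    Rat.cast_intCast, mul_div_cancel₀ _ hq0.ne']

end Finiteness

end Dyson

theorem dyson_theorem_general {α : ℝ} (hα : IsAlgebraic ℚ α) (hirr : Irrational α) {ρ : ℝ}
    (hρ : √(2 * (minpoly ℚ α).natDegree) < ρ + 1) :
    {pq : ℤ × ℤ | 1 ≤ pq.2 ∧ (pq.2 : ℝ) ^ ρ * |(pq.2 : ℝ) * α - (pq.1 : ℝ)| ≤ 1}.Finite := by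
  have hdeg : (2 : ℝ) ≤ (minpoly ℚ α).natDegree :=
    mod_cast (minpoly.two_le_natDegree_iff hα.isIntegral).mpr hirr
  have hρ1 : 2 < ρ + 1 := (Real.le_sqrt' two_pos).mpr (by linarith) |>.trans_lt hρ
  have hfin := Dyson.finite_setOf_abs_sub_le_den_rpow hα hρ
  refine Set.Finite.of_finite_fibers (fun pq => (pq.1 / pq.2 : ℚ)) (hfin.subset ?_) fun β _ =>
    (Dyson.finite_setOf_abs_mul_sub_le_of_div_eq (hirr.ne_rat β).symm 1).subset ?_
  · rintro _ ⟨⟨p, q⟩, ⟨hq, hpq⟩, rfl⟩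
    exact Dyson.abs_div_sub_le_den_rpow (by linarith) hq hpq
  · rintro ⟨p, q⟩ ⟨⟨hq, hpq⟩, hβ⟩
    have hqρ : 1 ≤ (q : ℝ) ^ ρ := Real.one_le_rpow (mod_cast hq) (by linarith)
    exact ⟨⟨hq, (le_mul_of_one_le_left (abs_nonneg _) hqρ).trans hpq⟩, hβ⟩

/-- Dyson's approximation theorem: if `α` is a real algebraic number of degree `d ≥ 3` over `ℚ`
and `ρ > √(2d)`, then the set of integer pairs `(p, q)` with `q ≥ 1` and `q^ρ * |q·α − p| ≤ 1`
is finite. -/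
theorem dyson_theorem (α : ℝ) (hα : IsAlgebraic ℚ α) (d : ℕ)
    (hd : (minpoly ℚ α).natDegree = d) (hd3 : 3 ≤ d)
    (ρ : ℝ) (hρ : Real.sqrt (2 * d) < ρ) :
    {pq : ℤ × ℤ | 1 ≤ pq.2 ∧ (pq.2 : ℝ) ^ ρ * |(pq.2 : ℝ) * α - (pq.1 : ℝ)| ≤ 1}.Finite :=
  dyson_theorem_general hα ((minpoly.two_le_natDegree_iff hα.isIntegral).mp (by omega))
    (by rw [hd]; linarith)
end

section
/- There is no Weierstrass equation y² + a₁xy + a₃y = x³ + a₂x² + a₄x + a₆ with integer coefficients a₁, a₂, a₃, a₄, a₆ whose discriminant Δ is equal to 1 or to −1. (This is the elliptic-curve case of the nonexistence, conjectured by Shafarevich and proved by Fontaine, of abelian varieties over ℚ with good reduction at every prime.) -/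
/-!
Suppose `Δ = d³` with `d` odd, `d ≢ 5 mod 8` and `c₄` prime to `d`; the values `Δ = ±1` are the
case `d = ±1`. The relation `c₄³ - c₆² = (12 d)³` makes `(c₄ - 12 d) (c₄² + 12 d c₄ + (12 d)²)` a
square. Its two factors have the same squarefree part, which divides `36 d` but is prime to `2 d`,
so `c₄ - 12 d` has the form `s²` or `3 s²` with `s` odd, and is `1` or `3` modulo `8`.
On the other hand the formula for `Δ`, read modulo `8`, forces `a₁` to be odd, whence `c₄ ≡ 1` and
`c₄ - 12 d ≡ 5` modulo `8`.
-/

lemma exists_squarefree_of_mul_eq_sq {x y z : ℤ} (hx : 0 < x) (h : x * y = z ^ 2) :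
    ∃ m s t : ℤ, 0 < m ∧ Squarefree m ∧ x = m * s ^ 2 ∧ y = m * t ^ 2 := by
  lift x to ℕ using hx.le
  obtain ⟨m, s, hm, hs, rfl, hsf⟩ := Nat.sq_mul_squarefree_of_pos (Int.natCast_pos.mp hx)
  have hm_ne : (m : ℤ) ≠ 0 := by positivity
  have hs_ne : (s : ℤ) ≠ 0 := by positivity
  replace hsf : Squarefree (m : ℤ) := Int.squarefree_natCast.mpr hsf
  push_cast at h ⊢
  obtain ⟨r, rfl⟩ : (s : ℤ) ∣ z :=
    (Int.pow_dvd_pow_iff two_ne_zero).mp ⟨m * y, by rw [← h, mul_assoc]⟩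
  have hr : m * y = r ^ 2 := mul_left_cancel₀ (pow_ne_zero 2 hs_ne) (by linear_combination h)
  obtain ⟨t, rfl⟩ : (m : ℤ) ∣ r := (hsf.dvd_pow_iff_dvd two_ne_zero).mp ⟨y, hr.symm⟩
  exact ⟨m, s, t, by positivity, hsf, mul_comm _ _,
    mul_left_cancel₀ hm_ne (by linear_combination hr)⟩

lemma exists_squarefree_dvd_of_cube_sub_cube_eq_sq {x n y : ℤ} (hne : x ≠ n)
    (h : x ^ 3 - n ^ 3 = y ^ 2) :
    ∃ m s : ℤ, 0 < m ∧ Squarefree m ∧ m ∣ 3 * n ∧ x - n = m * s ^ 2 := by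
  have hcubes : n ^ 3 ≤ x ^ 3 := by linarith [sq_nonneg y]
  have hlt : n < x := (Odd.pow_le_pow (by decide) |>.mp hcubes).lt_of_ne' hne
  have hfactor : (x - n) * (x ^ 2 + x * n + n ^ 2) = y ^ 2 := by linear_combination h
  obtain ⟨m, s, t, hm, hsf, hs, ht⟩ := exists_squarefree_of_mul_eq_sq (sub_pos.mpr hlt) hfactor
  -- `(x² + x n + n²) - (x - n) (x + 2 n) = 3 n²`
  have hdvd : m ∣ (3 * n) ^ 2 :=
    ⟨3 * t ^ 2 - 3 * s ^ 2 * (x + 2 * n), by linear_combination 3 * ht - 3 * (x + 2 * n) * hs⟩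
  exact ⟨m, s, hm, hsf, (hsf.dvd_pow_iff_dvd two_ne_zero).mp hdvd, hs⟩

lemma exists_sub_eq_sq_or_three_mul_sq {x d y : ℤ} (hx : IsCoprime x (2 * d))
    (h : x ^ 3 - (12 * d) ^ 3 = y ^ 2) :
    ∃ s : ℤ, x - 12 * d = s ^ 2 ∨ x - 12 * d = 3 * s ^ 2 := by
  have hcop : IsCoprime (x - 12 * d) (2 * d) := by
    simpa only [show x + 2 * d * -6 = x - 12 * d by ring] using hx.add_mul_left_left (-6)
  have hne : x ≠ 12 * d := by
    rintro rfl
    have hunit : IsUnit (2 * d) := isCoprime_zero_left.mp (by simpa using hcop)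
    exact Int.prime_two.not_isUnit (isUnit_of_mul_isUnit_left hunit)
  obtain ⟨m, s, hm, hsf, hdvd, hs⟩ := exists_squarefree_dvd_of_cube_sub_cube_eq_sq hne h
  have hm_cop : IsCoprime m (2 * d) := hcop.of_isCoprime_of_dvd_left ⟨s ^ 2, hs⟩
  have hm_dvd : m ∣ 3 * (2 * d) :=
    (hsf.dvd_pow_iff_dvd two_ne_zero).mp (hdvd.trans ⟨d, by ring⟩)
  have hm_three : m ∣ 3 := hm_cop.dvd_of_dvd_mul_right hm_dvd
  obtain rfl | rfl : m = 1 ∨ m = 3 := by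
    have := (Nat.dvd_prime Nat.prime_three).mp (Int.natAbs_dvd_natAbs.mpr hm_three)
    omega
  · exact ⟨s, .inl (by rw [hs, one_mul])⟩
  · exact ⟨s, .inr hs⟩

lemma sub_emod_eight_of_cube_sub_cube_eq_sq {x d y : ℤ} (hx : IsCoprime x (2 * d))
    (h : x ^ 3 - (12 * d) ^ 3 = y ^ 2) :
    (x - 12 * d) % 8 = 1 ∨ (x - 12 * d) % 8 = 3 := by
  have hx_odd : Odd x := Int.isCoprime_two_right.mp hx.of_mul_right_left
  have hodd : Odd (x - 12 * d) := hx_odd.sub_even (Even.mul_right (by decide) d)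
  obtain ⟨s, hs⟩ := exists_sub_eq_sq_or_three_mul_sq hx h
  have hs_odd : Odd s := by
    rcases hs with hs | hs <;> simp_all [Int.odd_mul, Int.odd_pow]
  have := Int.eight_dvd_sq_sub_one_of_odd hs_odd
  omega

lemma Δ_emod_eight_of_even_a₁ {W : WeierstrassCurve ℤ} (ha₁ : Even W.a₁) (hΔ : Odd W.Δ) :
    W.Δ % 8 = 5 := by
  obtain ⟨k, hk⟩ := ha₁.two_dvd
  have hb₂ : W.b₂ = 4 * (k ^ 2 + W.a₂) := by rw [WeierstrassCurve.b₂, hk]; ring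
  have hb₄ : W.b₄ = 2 * (W.a₄ + k * W.a₃) := by rw [WeierstrassCurve.b₄, hk]; ring
  have hdvd : 8 ∣ W.Δ + 27 * W.b₆ ^ 2 := by
    refine ⟨-2 * (k ^ 2 + W.a₂) ^ 2 * W.b₈ - 8 * (W.a₄ + k * W.a₃) ^ 3
      + 9 * (k ^ 2 + W.a₂) * (W.a₄ + k * W.a₃) * W.b₆, ?_⟩
    rw [WeierstrassCurve.Δ, hb₂, hb₄]
    ring
  have hb₆_sq : Odd (W.b₆ ^ 2) := by grind
  have := Int.eight_dvd_sq_sub_one_of_odd ((Int.odd_pow' two_ne_zero).mp hb₆_sq)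
  omega

lemma c₄_emod_eight_of_odd_a₁ {W : WeierstrassCurve ℤ} (ha₁ : Odd W.a₁) : W.c₄ % 8 = 1 := by
  have hb₂ : Odd W.b₂ := ha₁.pow.add_even (Even.mul_right (by decide) _)
  have := Int.eight_dvd_sq_sub_one_of_odd hb₂
  rw [WeierstrassCurve.c₄]
  omega

theorem no_weierstrass_unit_discriminant_general (W : WeierstrassCurve ℤ) {d : ℤ} (hd : Odd d)
    (hd_mod : d % 8 ≠ 5) (hc₄d : IsCoprime W.c₄ d) : W.Δ ≠ d ^ 3 := by
  intro hΔ
  have hΔ_mod : W.Δ % 8 ≠ 5 := by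
    have hfactor : W.Δ - d = d * (d ^ 2 - 1) := by rw [hΔ]; ring
    have : 8 ∣ W.Δ - d := hfactor ▸ (Int.eight_dvd_sq_sub_one_of_odd hd).mul_left d
    omega
  have ha₁ : Odd W.a₁ :=
    Int.not_even_iff_odd.mp fun ha₁ ↦ hΔ_mod (Δ_emod_eight_of_even_a₁ ha₁ (hΔ ▸ hd.pow))
  have hc₄ : W.c₄ % 8 = 1 := c₄_emod_eight_of_odd_a₁ ha₁
  have hc₄_two : IsCoprime W.c₄ 2 := Int.isCoprime_two_right.mpr (Int.odd_iff.mpr (by omega))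
  have hcubes : W.c₄ ^ 3 - (12 * d) ^ 3 = W.c₆ ^ 2 := by
    linear_combination 1728 * hΔ - W.c_relation
  have := sub_emod_eight_of_cube_sub_cube_eq_sq (hc₄_two.mul_right hc₄d) hcubes
  have := Int.odd_iff.mp hd
  omega

/-- There is no Weierstrass equation with integer coefficients whose discriminant is `1` or
`−1` (the elliptic-curve case of Fontaine's theorem: no abelian variety over `ℚ` has good
reduction at every prime). -/
theorem no_weierstrass_unit_discriminant (W : WeierstrassCurve ℤ) :
    W.Δ ≠ 1 ∧ W.Δ ≠ -1 :=
  ⟨no_weierstrass_unit_discriminant_general W odd_one (by decide) isCoprime_one_right,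
    no_weierstrass_unit_discriminant_general W (d := -1) (by decide) (by decide)
      isCoprime_one_right.neg_right⟩
end

section
/- The Hermite–Minkowski finiteness theorem: for every positive integer n and every finite set S of prime numbers, the set of subfields K of ℂ that are number fields of degree at most n over ℚ and whose discriminant has all of its prime factors in S is finite. -/
/-!
Let `K` have degree `m` and different `𝔇`, let `P` be a prime of `𝓞 K` above `p`, choose `t` with
`m < p ^ t`, and write `(p ^ t) = P ^ e * Q` with `Q` prime to `P`. The idempotent of
`𝓞 K / (p ^ t)` cutting out the factor `𝓞 K / P ^ e` has trace the rank `r` of that factor over the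
local ring `ℤ / p ^ t`, and `0 < r ≤ m < p ^ t`, so this trace is nonzero. As the idempotent lifts
to an element of `Q`, it follows that `P ^ e ∤ 𝔇`, whence every power of `P` dividing `𝔇` divides
`(p ^ t)`. Taking `t = m` for all ramified primes at once and passing to norms gives
`discr K ∣ radical (discr K) ^ m ^ 2`. So the discriminant is bounded in terms of `m` and `S`, and
Hermite's theorem on fields of bounded discriminant applies.
-/

open Module NumberField UniqueFactorizationMonoid

theorem isLocalRing_quotient_pow {A : Type*} [CommRing A] (m : Ideal A) [hm : m.IsMaximal]
    {t : ℕ} (ht : t ≠ 0) : IsLocalRing (A ⧸ m ^ t) := by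
  have : Nontrivial (A ⧸ m ^ t) :=
    Ideal.Quotient.nontrivial_iff.2 (ne_top_of_le_ne_top hm.ne_top (Ideal.pow_le_self ht))
  refine .of_isUnit_or_isUnit_one_sub_self fun a ↦ ?_
  obtain ⟨a, rfl⟩ := Ideal.Quotient.mk_surjective a
  by_cases ha : a ∈ m
  · have hnil : IsNilpotent (Ideal.Quotient.mk (m ^ t) a) :=
      ⟨t, by rw [← map_pow, Ideal.Quotient.eq_zero_iff_mem]; exact Ideal.pow_mem_pow ha t⟩
    exact .inr hnil.isUnit_one_sub
  · obtain ⟨b, i, hi, hbi⟩ := Ideal.IsMaximal.exists_inv_pow m ha t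
    refine .inl (.of_mul_eq_one_right (Ideal.Quotient.mk _ b) ?_)
    rw [← map_mul, eq_sub_of_add_eq hbi, map_sub, map_one, Ideal.Quotient.eq_zero_iff_mem.2 hi,
      sub_zero]

section Idempotent

variable {R : Type*} [CommRing R] [IsLocalRing R]

section LinearMap

variable {M : Type*} [AddCommGroup M] [Module R M] [Module.Projective R M] [Module.Finite R M]
  {f : M →ₗ[R] M}

theorem free_range_of_isIdempotentElem (hf : IsIdempotentElem f) :
    Module.Free R (LinearMap.range f) := by
  have : Module.Projective R (LinearMap.range f) := by
    refine .of_split (LinearMap.range f).subtype f.rangeRestrict ?_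
    ext x
    exact (LinearMap.IsIdempotentElem.isProj_range f hf).map_id x x.2
  exact Module.free_of_flat_of_isLocalRing

theorem trace_eq_finrank_range_of_isIdempotentElem (hf : IsIdempotentElem f) :
    LinearMap.trace R M f = finrank R (LinearMap.range f) := by
  have hker : LinearMap.ker f = LinearMap.range (1 - f) :=
    LinearMap.IsIdempotentElem.ker_eq_range hf
  have := free_range_of_isIdempotentElem hf
  have : Module.Free R (LinearMap.ker f) := hker ▸ free_range_of_isIdempotentElem hf.one_sub
  have : Module.Finite R (LinearMap.ker f) := hker ▸ inferInstance
  exact (LinearMap.IsIdempotentElem.isProj_range f hf).trace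

end LinearMap

theorem exists_trace_eq_natCast_of_isIdempotentElem {C : Type*} [CommRing C] [Algebra R C]
    [Module.Projective R C] [Module.Finite R C] {e : C} (he : IsIdempotentElem e) (he0 : e ≠ 0) :
    ∃ r : ℕ, 0 < r ∧ r ≤ finrank R C ∧ Algebra.trace R C e = r := by
  let f : C →ₗ[R] C := Algebra.lmul R C e
  have hf : IsIdempotentElem f := he.map _
  have hf0 : f ≠ 0 := fun h ↦ he0 (by simpa [f] using LinearMap.congr_fun h 1)
  have := free_range_of_isIdempotentElem hf
  refine ⟨finrank R (LinearMap.range f), ?_, Submodule.finrank_le _,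
    trace_eq_finrank_range_of_isIdempotentElem hf⟩
  rwa [Module.finrank_pos_iff_of_free R (LinearMap.range f), Submodule.nontrivial_iff_ne_bot, Ne,
    LinearMap.range_eq_bot]

end Idempotent

section TraceModIdeal

variable {A B : Type*} [CommRing A] [CommRing B] [Algebra A B] [Module.Free A B] [Module.Finite A B]

theorem trace_quotient_map_mk (I : Ideal A) (x : B) :
    Algebra.trace (A ⧸ I) (B ⧸ I.map (algebraMap A B)) (Ideal.Quotient.mk _ x) =
      Ideal.Quotient.mk I (Algebra.trace A B x) := by
  have hlmul : Algebra.lmul (A ⧸ I) (TensorProduct A (A ⧸ I) B) (1 ⊗ₜ x) =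
      (Algebra.lmul A B x).baseChange (A ⧸ I) := by
    ext
    simp
  rw [← Algebra.trace_eq_of_algEquiv (Algebra.TensorProduct.quotIdealMapEquivQuotTensor B I),
    Algebra.TensorProduct.quotIdealMapEquivQuotTensor_mk, Algebra.trace_apply, hlmul,
    LinearMap.trace_baseChange]
  rfl

theorem exists_trace_sub_natCast_mem (I : Ideal A) [IsLocalRing (A ⧸ I)] {x : B}
    (hx : x * (1 - x) ∈ I.map (algebraMap A B)) (hx0 : x ∉ I.map (algebraMap A B)) :
    ∃ r : ℕ, 0 < r ∧ r ≤ finrank A B ∧ Algebra.trace A B x - r ∈ I := by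
  have hidem : IsIdempotentElem (Ideal.Quotient.mk (I.map (algebraMap A B)) x) := by
    rw [← Ideal.Quotient.eq_zero_iff_mem, map_mul, map_sub, map_one] at hx
    rw [IsIdempotentElem]
    linear_combination -hx
  have e := (Algebra.TensorProduct.quotIdealMapEquivQuotTensor B I).symm.toLinearEquiv
  have : Module.Free (A ⧸ I) (B ⧸ I.map (algebraMap A B)) := .of_equiv e
  have : Module.Finite (A ⧸ I) (B ⧸ I.map (algebraMap A B)) := .equiv e
  have : Nontrivial A := (Ideal.Quotient.mk I).domain_nontrivial
  obtain ⟨r, hr0, hr, htr⟩ := exists_trace_eq_natCast_of_isIdempotentElem (R := A ⧸ I) hidem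
    (by rwa [Ne, Ideal.Quotient.eq_zero_iff_mem])
  refine ⟨r, hr0, by rwa [← e.finrank_eq, finrank_baseChange] at hr, ?_⟩
  rw [← Ideal.Quotient.eq_zero_iff_mem, map_sub, map_natCast, ← trace_quotient_map_mk, htr,
    sub_self]

theorem exists_mem_trace_sub_natCast_mem {I : Ideal A} [IsLocalRing (A ⧸ I)] {P Q : Ideal B}
    (hPQ : IsCoprime P Q) (hI : P * Q = I.map (algebraMap A B)) (hP : P ≠ ⊤) :
    ∃ x ∈ Q, ∃ r : ℕ, 0 < r ∧ r ≤ finrank A B ∧ Algebra.trace A B x - r ∈ I := by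
  obtain ⟨y, hy, x, hx, hyx⟩ := Ideal.isCoprime_iff_exists.1 hPQ
  have hxP : x ∉ P := fun hxP ↦ hP (P.eq_top_iff_one.2 (hyx ▸ add_mem hy hxP))
  have hIP : I.map (algebraMap A B) ≤ P := hI.ge.trans Ideal.mul_le_left
  have hidem : x * (1 - x) ∈ I.map (algebraMap A B) := by
    have h := Ideal.mul_mem_mul hy hx
    rwa [hI, eq_sub_of_add_eq hyx, mul_comm] at h
  exact ⟨x, hx, exists_trace_sub_natCast_mem I hidem fun hxI ↦ hxP (hIP hxI)⟩

end TraceModIdeal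

attribute [local instance] FractionRing.liftAlgebra in
theorem exists_natCast_mem_of_dvd_differentIdeal {A B : Type*} [CommRing A] [IsDedekindDomain A]
    [CommRing B] [IsDedekindDomain B] [Algebra A B] [Module.Free A B] [Module.Finite A B]
    [Algebra.IsSeparable (FractionRing A) (FractionRing B)]
    {I : Ideal A} [IsLocalRing (A ⧸ I)] {P Q : Ideal B} (hPQ : IsCoprime P Q)
    (hI : P * Q = I.map (algebraMap A B)) (hP : P ≠ ⊤) (hdvd : P ∣ differentIdeal A B) :
    ∃ r : ℕ, 0 < r ∧ r ≤ finrank A B ∧ (r : A) ∈ I := by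
  obtain ⟨x, hx, r, hr0, hr, htr⟩ := exists_mem_trace_sub_natCast_mem hPQ hI hP
  have hxI : Algebra.trace A B x ∈ I := by
    by_contra h
    rw [← Algebra.intTrace_eq_trace] at h
    exact not_dvd_differentIdeal_of_intTrace_not_mem A P Q hI x hx h hdvd
  exact ⟨r, hr0, hr, by simpa only [sub_sub_cancel] using sub_mem hxI htr⟩

theorem exists_mem_primeFactors_natCast_mem {R : Type*} [CommRing R] {P : Ideal R} [hP : P.IsPrime]
    {m : ℕ} (hm : m ≠ 0) (hmP : (m : R) ∈ P) : ∃ p ∈ m.primeFactors, (p : R) ∈ P := by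
  have h : ((∏ p ∈ m.primeFactors, p : ℕ) : R) ^ m ∈ P :=
    P.mem_of_dvd (by exact_mod_cast Nat.cast_dvd_cast (Nat.dvd_prod_primeFactors_pow_self hm)) hmP
  rw [← hP.prod_mem_iff, ← Nat.cast_prod]
  exact hP.mem_of_pow_mem _ h

section Discriminant

variable {K : Type*} [Field K] [NumberField K]

theorem not_dvd_differentIdeal_of_mul_eq_span_pow {p t : ℕ} (hp : p.Prime)
    (ht : finrank ℚ K < p ^ t) {P Q : Ideal (𝓞 K)} (hPQ : IsCoprime P Q)
    (hmul : P * Q = Ideal.span {(p : 𝓞 K)} ^ t) (hP : P ≠ ⊤) :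
    ¬ P ∣ differentIdeal ℤ (𝓞 K) := by
  intro hdvd
  have ht0 : t ≠ 0 := fun h ↦
    hP (top_le_iff.1 (by simpa [h] using hmul.ge.trans Ideal.mul_le_left))
  have : (Ideal.span {(p : ℤ)}).IsMaximal :=
    PrincipalIdealRing.isMaximal_of_irreducible (Nat.prime_iff_prime_int.1 hp).irreducible
  have := isLocalRing_quotient_pow (Ideal.span {(p : ℤ)}) ht0
  have hmap : P * Q = (Ideal.span {(p : ℤ)} ^ t).map (algebraMap ℤ (𝓞 K)) := by
    rw [hmul, Ideal.map_pow, Ideal.map_span, Set.image_singleton, map_natCast]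
  obtain ⟨r, hr0, hr, hmem⟩ := exists_natCast_mem_of_dvd_differentIdeal hPQ hmap hP hdvd
  rw [Ideal.span_singleton_pow, Ideal.mem_span_singleton] at hmem
  rw [RingOfIntegers.rank] at hr
  exact (Nat.le_of_dvd hr0 (by exact_mod_cast hmem)).not_gt (hr.trans_lt ht)

theorem pow_dvd_span_of_pow_dvd_differentIdeal {p t k : ℕ} (hp : p.Prime)
    (ht : finrank ℚ K < p ^ t) {P : Ideal (𝓞 K)} [hP : P.IsPrime] (hpP : (p : 𝓞 K) ∈ P)
    (hk : P ^ k ∣ differentIdeal ℤ (𝓞 K)) : P ^ k ∣ Ideal.span {(p : 𝓞 K)} ^ t := by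
  have hp0 : Ideal.span {(p : 𝓞 K)} ≠ ⊥ := by simpa using hp.ne_zero
  have hP0 : P ≠ ⊥ := ne_bot_of_le_ne_bot hp0 ((Ideal.span_singleton_le_iff_mem P).2 hpP)
  have hPmax : P.IsMaximal := hP.isMaximal hP0
  obtain ⟨Q, hQ, hPQ⟩ := (FiniteMultiplicity.of_prime_left (Ideal.prime_of_isPrime hP0 hP)
    (pow_ne_zero t hp0)).exists_eq_pow_mul_and_not_dvd
  set e := multiplicity P (Ideal.span {(p : 𝓞 K)} ^ t)
  have hcop : IsCoprime (P ^ e) Q :=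
    .pow_left <| Ideal.isCoprime_iff_sup_eq.2 <|
      hPmax.out.2 _ (left_lt_sup.2 fun h ↦ hPQ (Ideal.dvd_iff_le.2 h))
  by_contra hkt
  have hek : e < k := lt_of_not_ge fun h ↦ hkt ((pow_dvd_pow P h).trans ⟨Q, hQ⟩)
  have hPe : P ^ e ≠ ⊤ := by
    have ht0 : t ≠ 0 := by
      rintro rfl
      exact (finrank_pos (R := ℚ) (M := K)).ne' (by simpa using ht)
    have hPt : P ∣ Ideal.span {(p : 𝓞 K)} ^ t :=
      (Ideal.dvd_span_singleton.2 hpP).trans (dvd_pow_self _ ht0)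
    exact ne_top_of_le_ne_top hP.ne_top
      (Ideal.pow_le_self fun he ↦ multiplicity_eq_zero.1 he hPt)
  exact not_dvd_differentIdeal_of_mul_eq_span_pow hp ht hcop hQ.symm hPe
    ((pow_dvd_pow P hek.le).trans hk)

variable (K)

theorem differentIdeal_dvd_span_radical_discr_pow :
    differentIdeal ℤ (𝓞 K) ∣
      Ideal.span {((radical (discr K).natAbs : ℕ) : 𝓞 K)} ^ finrank ℚ K := by
  refine (dvd_iff_emultiplicity_le differentIdeal_ne_bot).2 fun P hP ↦
    emultiplicity_le_emultiplicity_iff.2 fun k hk ↦ ?_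
  rcases eq_or_ne k 0 with rfl | hk0
  · rw [pow_zero]
    exact one_dvd _
  have hPprime := Ideal.isPrime_of_prime hP
  have hdP : ((discr K).natAbs : 𝓞 K) ∈ P := by
    rw [← absNorm_differentIdeal K (𝓞 K)]
    exact Ideal.le_of_dvd ((dvd_pow_self P hk0).trans hk) (Ideal.absNorm_mem _)
  obtain ⟨p, hpd, hpP⟩ :=
    exists_mem_primeFactors_natCast_mem (Int.natAbs_ne_zero.2 (discr_ne_zero K)) hdP
  have hp : p.Prime := Nat.prime_of_mem_primeFactors hpd
  have hprad : p ∣ radical (discr K).natAbs :=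
    Nat.radical_eq_prod_primeFactors ▸ Finset.dvd_prod_of_mem _ hpd
  have hspan : Ideal.span {(p : 𝓞 K)} ∣
      Ideal.span {((radical (discr K).natAbs : ℕ) : 𝓞 K)} :=
    Ideal.dvd_span_singleton.2 (Ideal.mem_span_singleton.2 (Nat.cast_dvd_cast hprad))
  exact (pow_dvd_span_of_pow_dvd_differentIdeal hp (Nat.lt_pow_self hp.one_lt) hpP hk).trans
    (pow_dvd_pow_of_dvd hspan _)

theorem natAbs_discr_dvd_radical_pow :
    (discr K).natAbs ∣ radical (discr K).natAbs ^ finrank ℚ K ^ 2 := by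
  have h := Ideal.absNorm_dvd_absNorm_of_le
    (Ideal.le_of_dvd (differentIdeal_dvd_span_radical_discr_pow K))
  rwa [absNorm_differentIdeal K (𝓞 K), map_pow, Ideal.absNorm_span_natCast, RingOfIntegers.rank,
    ← pow_mul, ← sq] at h

theorem abs_discr_le_of_forall_prime_dvd_mem {n : ℕ} (hn : finrank ℚ K ≤ n) {S : Finset ℕ}
    (hS : ∀ p : ℕ, p.Prime → (p : ℤ) ∣ discr K → p ∈ S) :
    |discr K| ≤ ((∏ p ∈ S with p.Prime, p) ^ n ^ 2 : ℕ) := by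
  have hsub : (discr K).natAbs.primeFactors ⊆ {p ∈ S | p.Prime} := fun p hpd ↦
    have hp := Nat.prime_of_mem_primeFactors hpd
    Finset.mem_filter.2 ⟨hS p hp (Int.natCast_dvd.2 (Nat.dvd_of_mem_primeFactors hpd)), hp⟩
  have hpos : 0 < ∏ p ∈ S with p.Prime, p :=
    Finset.prod_pos fun p hp ↦ (Finset.mem_filter.1 hp).2.pos
  have hrad : radical (discr K).natAbs ≤ ∏ p ∈ S with p.Prime, p := by
    rw [Nat.radical_eq_prod_primeFactors]
    exact Nat.le_of_dvd hpos (Finset.prod_dvd_prod_of_subset _ _ _ hsub)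
  rw [Int.abs_eq_natAbs, Nat.cast_le]
  calc (discr K).natAbs
    _ ≤ radical (discr K).natAbs ^ finrank ℚ K ^ 2 :=
      Nat.le_of_dvd (pow_pos (Nat.radical_pos _) _) (natAbs_discr_dvd_radical_pow K)
    _ ≤ (∏ p ∈ S with p.Prime, p) ^ finrank ℚ K ^ 2 := by gcongr
    _ ≤ (∏ p ∈ S with p.Prime, p) ^ n ^ 2 := by gcongr

end Discriminant

theorem finite_setOf_abs_discr_le (A : Type*) [Field A] [CharZero A] (N : ℕ) :
    {K : Subfield A | ∃ _ : NumberField K, |discr K| ≤ N}.Finite := by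
  refine ((finite_of_discr_bdd A N).image fun F ↦ F.1.toSubfield).subset ?_
  rintro K ⟨hK, hN⟩
  let F : IntermediateField ℚ A := { K with algebraMap_mem' := fun r ↦ by simp }
  exact ⟨⟨F, hK.to_finiteDimensional⟩, hN, rfl⟩

theorem hermite_minkowski_general (A : Type*) [Field A] [CharZero A] (n : ℕ) (S : Finset ℕ) :
    {K : Subfield A | ∃ _ : NumberField K, finrank ℚ K ≤ n ∧
      ∀ p : ℕ, p.Prime → (p : ℤ) ∣ discr K → p ∈ S}.Finite :=
  (finite_setOf_abs_discr_le A ((∏ p ∈ S with p.Prime, p) ^ n ^ 2)).subset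
    fun K ⟨hK, hn, hS⟩ ↦ ⟨hK, abs_discr_le_of_forall_prime_dvd_mem K hn hS⟩

/-- The Hermite–Minkowski finiteness theorem: for every positive integer `n` and finite set
`S` of primes, there are only finitely many subfields of `ℂ` that are number fields of degree
at most `n` whose discriminant has all its prime factors in `S`. -/
theorem hermite_minkowski (n : ℕ) (hn : 0 < n) (S : Finset ℕ) :
    {K : Subfield ℂ | ∃ h : NumberField K,
      Module.finrank ℚ K ≤ n ∧
      ∀ p : ℕ, p.Prime → (p : ℤ) ∣ NumberField.discr K → p ∈ S}.Finite :=
  hermite_minkowski_general ℂ n S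
end
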